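/- arXiv:1809.05191 — 3 statements merged into one kernel-verified Lean document; each statement's English description precedes it below -/
import Mathlib

section
/- Let 𝔽 be ℝ or ℂ. A homogeneous cubic polynomial Φ ∈ 𝔽[x,y,z] is irreducible over 𝔽 if and only if there exist g ∈ GL₃(𝔽), a nonzero constant c ∈ 𝔽, and a, b ∈ 𝔽 such that Φ ∘ g = c·(y²z − x³ − a·x z² − b·z³) identically. Moreover: (a) if this holds both for the pair (a, b) and for the pair (a′, b′) (with possibly different g and c), then (a′, b′) = (t⁴a, t⁶b) for some nonzero t ∈ 𝔽; and (b) the curve defined by y²z = x³ + a x z² + b z³ has finite stabilizer in PGL₃(𝔽) if and only if (a, b) ≠ (0, 0). -/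
open MvPolynomial
open scoped MatrixGroups

noncomputable section

/-- Substitution of a linear change of variables into a polynomial in three variables:
`Φ ↦ Φ ∘ M`. -/
def substMat {𝔽 : Type*} [Field 𝔽] (M : Matrix (Fin 3) (Fin 3) 𝔽) :
    MvPolynomial (Fin 3) 𝔽 →ₐ[𝔽] MvPolynomial (Fin 3) 𝔽 :=
  aeval fun i => ∑ j, C (M i j) * X j

/-- The Weierstrass normal-form cubic `y²z − x³ − a·xz² − b·z³` (the curve
`y²z = x³ + a x z² + b z³`). -/
def weierstrass {𝔽 : Type*} [Field 𝔽] (a b : 𝔽) : MvPolynomial (Fin 3) 𝔽 :=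
  X 1 ^ 2 * X 2 - X 0 ^ 3 - C a * (X 0 * X 2 ^ 2) - C b * (X 2 ^ 3)

/-- The stabilizer in `PGL₃(𝔽)` of the curve defined by `Ψ`: the image in
`PGL₃(𝔽) = GL₃(𝔽)/center` of the set of `g ∈ GL₃(𝔽)` with `Ψ ∘ g` a nonzero scalar
multiple of `Ψ`. -/
def projStabilizer {𝔽 : Type*} [Field 𝔽] (Ψ : MvPolynomial (Fin 3) 𝔽) :
    Set (GL (Fin 3) 𝔽 ⧸ Subgroup.center (GL (Fin 3) 𝔽)) :=
  QuotientGroup.mk '' {g : GL (Fin 3) 𝔽 | ∃ c : 𝔽, c ≠ 0 ∧ substMat (↑g) Ψ = c • Ψ}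
theorem bu_plane (f g : (Fin 3 → ℝ) → ℝ) (hf : Continuous f) (hg : Continuous g)
    (of : ∀ v, f (-v) = - f v) (og : ∀ v, g (-v) = - g v) :
    ∃ v, v ≠ 0 ∧ f v = 0 ∧ g v = 0 := by
  by_contra hcon
  push Not at hcon
  let φ : ℂ → (Fin 3 → ℝ) := fun w => ![w.re, w.im, Real.sqrt (1 - ‖w‖ ^ 2)]
  have hφ : Continuous φ := by
    refine continuous_pi fun i => ?_
    fin_cases i
    · exact Complex.continuous_re
    · exact Complex.continuous_im
    · change Continuous fun w : ℂ => Real.sqrt (1 - ‖w‖ ^ 2)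
      fun_prop
  have hφ0 : ∀ w, φ w ≠ 0 := by
    intro w hw
    have h0 : w.re = 0 := congrFun hw 0
    have h1 : w.im = 0 := congrFun hw 1
    have h2 : Real.sqrt (1 - ‖w‖ ^ 2) = 0 := congrFun hw 2
    have : w = 0 := Complex.ext h0 h1
    subst this
    simp at h2
  let F : C(ℂ, ℂ) := ⟨fun w => (f (φ w) : ℂ) + (g (φ w) : ℂ) * Complex.I, by fun_prop⟩
  have hF : ∀ w, F w ∈ ({0}ᶜ : Set ℂ) := by
    intro w hw
    have hw' : (f (φ w) : ℂ) + (g (φ w) : ℂ) * Complex.I = 0 := hw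
    have h1 := congrArg Complex.re hw'
    have h2 := congrArg Complex.im hw'
    simp at h1 h2
    exact hcon (φ w) (hφ0 w) h1 h2
  obtain ⟨G, ⟨-, hG⟩, -⟩ := Complex.isCoveringMapOn_exp.existsUnique_continuousMap_lifts F
    (a₀ := 0) (e₀ := Complex.log (F 0)) (Complex.exp_log (hF 0)) hF
  have hG' : ∀ w, Complex.exp (G w) = F w := fun w => congrFun hG w
  have hanti : ∀ w : ℂ, ‖w‖ = 1 → F (-w) = - F w := by
    intro w hw
    have : φ (-w) = - φ w := by
      funext i
      fin_cases i <;> simp [φ, hw]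
    change (f (φ (-w)) : ℂ) + (g (φ (-w)) : ℂ) * Complex.I
      = -((f (φ w) : ℂ) + (g (φ w) : ℂ) * Complex.I)
    rw [this, of, og]
    push_cast
    ring
  let e : ℝ → ℂ := fun θ => Complex.exp (θ * Complex.I)
  have he : Continuous e := by fun_prop
  have hen : ∀ θ, ‖e θ‖ = 1 := fun θ => Complex.norm_exp_ofReal_mul_I θ
  let D : ℝ → ℝ := fun θ => (G (- e θ) - G (e θ)).im
  have hD : Continuous D := by fun_prop
  have hD0 : ∀ θ, D θ ≠ 0 := by
    intro θ h
    have h1 : Complex.exp (G (- e θ) - G (e θ)) = -1 := by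
      rw [Complex.exp_sub, hG', hG', hanti _ (hen θ)]
      field_simp [show F (e θ) ≠ 0 from hF _]
    have h2 := congrArg Complex.re h1
    rw [Complex.exp_re, show (G (- e θ) - G (e θ)).im = 0 from h] at h2
    simp at h2
    have := Real.exp_pos ((G (-e θ)).re - (G (e θ)).re)
    linarith
  have hπ : D Real.pi = - D 0 := by
    have h1 : e Real.pi = - e 0 := by simp [e]
    simp only [D, h1, neg_neg]
    simp
  have : (0:ℝ) ∈ Set.range D := by
    rcases le_total (D 0) 0 with h | h
    · exact mem_range_of_exists_le_of_exists_ge hD ⟨0, h⟩ ⟨Real.pi, by linarith⟩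
    · exact mem_range_of_exists_le_of_exists_ge hD ⟨Real.pi, by linarith⟩ ⟨0, h⟩
  obtain ⟨θ, hθ⟩ := this
  exact hD0 θ hθ

theorem krull_plane {k : Type*} [Field k] [IsAlgClosed k] (f g : MvPolynomial (Fin 3) k)
    (hf : eval 0 f = 0) (hg : eval 0 g = 0) :
    ∃ v, v ≠ 0 ∧ eval v f = 0 ∧ eval v g = 0 := by
  classical
  by_contra hcon
  push Not at hcon
  let I : Ideal (MvPolynomial (Fin 3) k) := Ideal.span (({f, g} : Finset _) : Set _)
  let a1 : MvPolynomial (Fin 3) k →ₐ[k] MvPolynomial (Fin 3) k := aeval ![0, X 1, X 2]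
  let a2 : MvPolynomial (Fin 3) k →ₐ[k] MvPolynomial (Fin 3) k := aeval ![0, 0, X 2]
  let a3 : MvPolynomial (Fin 3) k →ₐ[k] MvPolynomial (Fin 3) k := aeval ![0, 0, 0]
  have h12 : a2.comp a1 = a2 := by
    ext i; fin_cases i <;> simp [a1, a2]
  have h23 : a3.comp a2 = a3 := by
    ext i; fin_cases i <;> simp [a3, a2]
  have key : ∀ a b : MvPolynomial (Fin 3) k →ₐ[k] MvPolynomial (Fin 3) k, b.comp a = b →
      (∃ i, b (X i) = 0 ∧ a (X i) ≠ 0) → RingHom.ker a.toRingHom < RingHom.ker b.toRingHom := by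
    rintro a b hab ⟨i, h1, h2⟩
    refine lt_of_le_of_ne ?_ ?_
    · intro p hp
      have hp' : a p = 0 := hp
      change b p = 0
      rw [← hab, AlgHom.comp_apply, hp', map_zero]
    · intro h
      have : X i ∈ RingHom.ker b.toRingHom := h1
      rw [← h] at this
      exact h2 this
  have l01 : (⊥ : Ideal (MvPolynomial (Fin 3) k)) < RingHom.ker a1.toRingHom := by
    refine bot_lt_iff_ne_bot.2 fun h => ?_
    have : X 0 ∈ RingHom.ker a1.toRingHom := show a1 (X 0) = 0 by simp [a1]
    rw [h] at this
    exact X_ne_zero _ this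
  have l12 := key a1 a2 h12 ⟨1, by simp [a2], by simp [a1]⟩
  have l23 := key a2 a3 h23 ⟨2, by simp [a3], by simp [a2]⟩
  have hp1 : (RingHom.ker a1.toRingHom).IsPrime := RingHom.ker_isPrime _
  have hp2 : (RingHom.ker a2.toRingHom).IsPrime := RingHom.ker_isPrime _
  have hp3 : (RingHom.ker a3.toRingHom).IsPrime := RingHom.ker_isPrime _
  have t1 := Ideal.height_add_one_le_of_lt_of_isPrime l01
  have t2 := Ideal.height_add_one_le_of_lt_of_isPrime l12
  have t3 := Ideal.height_add_one_le_of_lt_of_isPrime l23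
  have ha3 : ∀ p, a3 p = C (eval 0 p) := by
    intro p
    have : a3 = (Algebra.ofId k _).comp (aeval (0 : Fin 3 → k)) := by
      ext i; fin_cases i <;> simp [a3]
    rw [this]
    simp [Algebra.ofId_apply, MvPolynomial.algebraMap_eq, MvPolynomial.aeval_eq_eval]
  have hrad : I.radical = RingHom.ker a3.toRingHom := by
    rw [← vanishingIdeal_zeroLocus_eq_radical (K := k)]
    have hz : zeroLocus k I = {0} := by
      ext v
      simp only [I, zeroLocus_span, Set.mem_ofPred_eq, Set.mem_singleton_iff]
      constructor
      · intro h
        by_contra hv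
        have h1 := h f (by simp)
        have h2 := h g (by simp)
        rw [aeval_eq_eval] at h1 h2
        exact hcon v hv h1 h2
      · rintro rfl p hp
        simp at hp
        rw [aeval_eq_eval]
        rcases hp with rfl | rfl
        · exact hf
        · exact hg
    rw [hz]
    ext p
    rw [mem_vanishingIdeal_singleton_iff, aeval_eq_eval]
    change _ ↔ a3 p = 0
    rw [ha3]
    simp
  have hmin : RingHom.ker a3.toRingHom ∈ I.minimalPrimes := by
    refine ⟨⟨hp3, hrad ▸ Ideal.le_radical⟩, ?_⟩
    rintro J ⟨hJ, hIJ⟩ -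
    rw [← hrad]
    exact hJ.radical_le_iff.2 hIJ
  have hle := Ideal.height_le_card_of_mem_minimalPrimes_span_finset hmin
  have hc : (({f, g} : Finset (MvPolynomial (Fin 3) k)).card : ℕ∞) ≤ 2 := by
    exact_mod_cast Finset.card_le_two
  rw [Ideal.height_bot] at t1
  have : (3 : ℕ∞) ≤ 2 := by
    calc (3:ℕ∞) = 0 + 1 + 1 + 1 := by norm_num
      _ ≤ (RingHom.ker a1.toRingHom).height + 1 + 1 := by gcongr
      _ ≤ (RingHom.ker a2.toRingHom).height + 1 := by gcongr
      _ ≤ _ := t3.trans (hle.trans hc)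
  exact absurd this (by decide)

section general
variable {k : Type*} [Field k]

theorem substMat_comp (M N : Matrix (Fin 3) (Fin 3) k) (Φ : MvPolynomial (Fin 3) k) :
    substMat N (substMat M Φ) = substMat (M * N) Φ := by
  have : (substMat N).comp (substMat M) = substMat (M * N) := by
    ext i : 1
    simp only [substMat, AlgHom.comp_apply, aeval_X, map_sum, map_mul, Matrix.mul_apply,
      algHom_C, algebraMap_eq, Fin.sum_univ_three, map_add]
    ring
  rw [← this]; rfl

theorem substMat_one (Φ : MvPolynomial (Fin 3) k) : substMat 1 Φ = Φ := by
  have : substMat (1 : Matrix (Fin 3) (Fin 3) k) = AlgHom.id k _ := by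
    ext i : 1
    simp [substMat, Matrix.one_apply]
  rw [this]; rfl

theorem eval_substMat (M : Matrix (Fin 3) (Fin 3) k) (Φ : MvPolynomial (Fin 3) k)
    (v : Fin 3 → k) : eval v (substMat M Φ) = eval (M.mulVec v) Φ := by
  have : (aeval v : MvPolynomial (Fin 3) k →ₐ[k] k).comp (substMat M) = aeval (M.mulVec v) := by
    ext i : 1
    simp [substMat, Matrix.mulVec, dotProduct]
  have h := congrArg (fun f => f Φ) this
  simpa [aeval_eq_eval] using h

theorem irreducible_substMat (g : GL (Fin 3) k) (Φ : MvPolynomial (Fin 3) k) :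
    Irreducible (substMat (↑g) Φ) ↔ Irreducible Φ := by
  let e : MvPolynomial (Fin 3) k ≃ₐ[k] MvPolynomial (Fin 3) k :=
    AlgEquiv.ofAlgHom (substMat (↑g)) (substMat (↑g⁻¹))
      (by
        refine AlgHom.ext fun p => ?_
        rw [AlgHom.comp_apply, substMat_comp, ← Units.val_mul, inv_mul_cancel]
        exact substMat_one p)
      (by
        refine AlgHom.ext fun p => ?_
        rw [AlgHom.comp_apply, substMat_comp, ← Units.val_mul, mul_inv_cancel]
        exact substMat_one p)
  exact MulEquiv.irreducible_iff e (x := Φ)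

theorem isHomogeneous_substMat (M : Matrix (Fin 3) (Fin 3) k) {Φ : MvPolynomial (Fin 3) k}
    {n : ℕ} (h : Φ.IsHomogeneous n) : (substMat M Φ).IsHomogeneous n := by
  have := h.aeval (fun i => ∑ j, C (M i j) * X j) (n := 1) (fun i => by
    refine IsHomogeneous.sum _ _ _ fun j _ => ?_
    simpa using (isHomogeneous_C (Fin 3) (M i j)).mul (isHomogeneous_X k j))
  simpa [substMat] using this

theorem pderiv_substMat (M : Matrix (Fin 3) (Fin 3) k) (i : Fin 3) (Φ : MvPolynomial (Fin 3) k) :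
    pderiv i (substMat M Φ) = ∑ l, C (M l i) * substMat M (pderiv l Φ) := by
  induction Φ using MvPolynomial.induction_on with
  | C a => simp [substMat, algebraMap_eq]
  | add p q hp hq =>
    simp only [map_add, hp, hq, mul_add, Finset.sum_add_distrib]
  | mul_X p n hp =>
    have hX : pderiv i (substMat M (X n)) = C (M n i) := by
      simp [substMat, pderiv_X, Pi.single_apply]
    rw [map_mul, Derivation.leibniz, hp, hX]
    simp only [Derivation.leibniz, smul_eq_mul, map_add, map_mul, Finset.mul_sum, mul_add,
      Finset.sum_add_distrib, pderiv_X]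
    congr 1
    · rw [Finset.sum_eq_single n]
      · simp; ring
      · intro b _ hb
        simp [Pi.single_apply, Ne.symm hb]
      · simp
    · refine Finset.sum_congr rfl fun l _ => by ring

/-- Hessian matrix. -/
def hessM (Φ : MvPolynomial (Fin 3) k) : Matrix (Fin 3) (Fin 3) (MvPolynomial (Fin 3) k) :=
  Matrix.of fun i j => pderiv i (pderiv j Φ)

/-- Hessian determinant. -/
def hess (Φ : MvPolynomial (Fin 3) k) : MvPolynomial (Fin 3) k := (hessM Φ).det

theorem hess_substMat (M : Matrix (Fin 3) (Fin 3) k) (Φ : MvPolynomial (Fin 3) k) :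
    hess (substMat M Φ) = (M.det ^ 2) • substMat M (hess Φ) := by
  have h : hessM (substMat M Φ) =
      (M.map C).transpose * ((substMat M).toRingHom.mapMatrix (hessM Φ)) * (M.map C) := by
    refine Matrix.ext fun i j => ?_
    simp only [hessM, Matrix.of_apply, pderiv_substMat, map_add, Derivation.leibniz, smul_eq_mul,
      pderiv_C, Matrix.mul_apply, Matrix.map_apply, Matrix.transpose_apply,
      RingHom.mapMatrix_apply, Fin.sum_univ_three, AlgHom.toRingHom_eq_coe, RingHom.coe_coe]
    ring
  have hd : (M.map (C (σ := Fin 3))).det = C M.det := by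
    rw [RingHom.map_det]; rfl
  unfold hess
  rw [h, Matrix.det_mul, Matrix.det_mul, Matrix.det_transpose, hd, ← RingHom.map_det, smul_eq_C_mul]
  simp only [AlgHom.toRingHom_eq_coe, RingHom.coe_coe, C_pow]
  ring

theorem hess_smul (c : k) (Φ : MvPolynomial (Fin 3) k) : hess (c • Φ) = c ^ 3 • hess Φ := by
  have : hessM (c • Φ) = (C c : MvPolynomial (Fin 3) k) • hessM Φ := by
    refine Matrix.ext fun i j => ?_
    simp [hessM, smul_eq_C_mul]
  unfold hess
  rw [this, Matrix.det_smul, smul_eq_C_mul]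
  simp

theorem isHomogeneous_hess {Φ : MvPolynomial (Fin 3) k} (h : Φ.IsHomogeneous 3) :
    (hess Φ).IsHomogeneous 3 := by
  have h1 : ∀ i j, (hessM Φ i j).IsHomogeneous 1 := fun i j => by
    exact (h.pderiv (i := j)).pderiv (i := i)
  have h3 : ∀ a b c d e f, (hessM Φ a b * hessM Φ c d * hessM Φ e f).IsHomogeneous 3 :=
    fun a b c d e f => ((h1 a b).mul (h1 c d)).mul (h1 e f)
  unfold hess
  rw [Matrix.det_fin_three]
  exact (((((h3 _ _ _ _ _ _).sub (h3 _ _ _ _ _ _)).sub (h3 _ _ _ _ _ _)).add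
    (h3 _ _ _ _ _ _)).add (h3 _ _ _ _ _ _)).sub (h3 _ _ _ _ _ _)

/-- General ternary cubic. -/
def cub (a b c d e f g h i j : k) : MvPolynomial (Fin 3) k :=
  C a * X 0 ^ 3 + C b * (X 0 ^ 2 * X 1) + C c * (X 0 ^ 2 * X 2) + C d * (X 0 * X 1 ^ 2)
  + C e * (X 0 * X 1 * X 2) + C f * (X 0 * X 2 ^ 2) + C g * X 1 ^ 3 + C h * (X 1 ^ 2 * X 2)
  + C i * (X 1 * X 2 ^ 2) + C j * X 2 ^ 3

theorem exists_cub_aux (p q s : ℕ) (hd : p + q + s = 3) (r : k) :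
    ∃ a b c d e f g h i j, C r * (X 0 ^ p * X 1 ^ q * X 2 ^ s) = cub a b c d e f g h i j := by
  obtain rfl : s = 3 - p - q := by omega
  have hp : p ≤ 3 := by omega
  have hq : q ≤ 3 - p := by omega
  interval_cases p <;> interval_cases q
  · exact ⟨0, 0, 0, 0, 0, 0, 0, 0, 0, r, by simp [cub]⟩
  · exact ⟨0, 0, 0, 0, 0, 0, 0, 0, r, 0, by simp [cub]⟩
  · exact ⟨0, 0, 0, 0, 0, 0, 0, r, 0, 0, by simp [cub]⟩
  · exact ⟨0, 0, 0, 0, 0, 0, r, 0, 0, 0, by simp [cub]⟩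
  · exact ⟨0, 0, 0, 0, 0, r, 0, 0, 0, 0, by simp [cub]⟩
  · exact ⟨0, 0, 0, 0, r, 0, 0, 0, 0, 0, by simp [cub]⟩
  · exact ⟨0, 0, 0, r, 0, 0, 0, 0, 0, 0, by simp [cub]⟩
  · exact ⟨0, 0, r, 0, 0, 0, 0, 0, 0, 0, by simp [cub]⟩
  · exact ⟨0, r, 0, 0, 0, 0, 0, 0, 0, 0, by simp [cub]⟩
  · exact ⟨r, 0, 0, 0, 0, 0, 0, 0, 0, 0, by simp [cub]⟩

theorem exists_cub {Φ : MvPolynomial (Fin 3) k} (hΦ : Φ.IsHomogeneous 3) :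
    ∃ a b c d e f g h i j, Φ = cub a b c d e f g h i j := by
  rw [Φ.as_sum]
  refine Finset.sum_induction _
    (fun Ψ => ∃ a b c d e f g h i j, Ψ = cub a b c d e f g h i j) ?_ ?_ ?_
  · rintro _ _ ⟨a, b, c, d, e, f, g, h, i, j, rfl⟩ ⟨a', b', c', d', e', f', g', h', i', j', rfl⟩
    exact ⟨a + a', b + b', c + c', d + d', e + e', f + f', g + g', h + h', i + i', j + j', by
      simp only [cub, C_add]; ring⟩
  · exact ⟨0, 0, 0, 0, 0, 0, 0, 0, 0, 0, by simp [cub]⟩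
  · intro m hm
    have hd : m 0 + m 1 + m 2 = 3 := by
      have := hΦ (mem_support_iff.1 hm)
      simpa [Finsupp.weight_apply, Finsupp.sum_fintype, Fin.sum_univ_three] using this
    generalize coeff m Φ = r
    have hmon : monomial m r = C r * (X 0 ^ m 0 * X 1 ^ m 1 * X 2 ^ m 2) := by
      rw [monomial_eq, Finsupp.prod_fintype _ _ (by simp), Fin.prod_univ_three]
    rw [hmon]
    exact exists_cub_aux _ _ _ hd r

theorem eval_cub (a b c d e f g h i j : k) (v : Fin 3 → k) :
    eval v (cub a b c d e f g h i j) = a * v 0 ^ 3 + b * (v 0 ^ 2 * v 1) + c * (v 0 ^ 2 * v 2)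
      + d * (v 0 * v 1 ^ 2) + e * (v 0 * v 1 * v 2) + f * (v 0 * v 2 ^ 2) + g * v 1 ^ 3
      + h * (v 1 ^ 2 * v 2) + i * (v 1 * v 2 ^ 2) + j * v 2 ^ 3 := by
  simp [cub]

theorem eval_neg_of_hom {Φ : MvPolynomial (Fin 3) k} (hΦ : Φ.IsHomogeneous 3) (v : Fin 3 → k) :
    eval (-v) Φ = - eval v Φ := by
  obtain ⟨a, b, c, d, e, f, g, h, i, j, rfl⟩ := exists_cub hΦ
  simp only [eval_cub, Pi.neg_apply]
  ring

theorem eval_zero_of_hom {Φ : MvPolynomial (Fin 3) k} (hΦ : Φ.IsHomogeneous 3) :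
    eval 0 Φ = 0 := by
  obtain ⟨a, b, c, d, e, f, g, h, i, j, rfl⟩ := exists_cub hΦ
  rw [eval_cub]; simp

theorem isHomogeneous_cub (a b c d e f g h i j : k) :
    (cub a b c d e f g h i j).IsHomogeneous 3 := by
  have hX : ∀ n m, (X n ^ m : MvPolynomial (Fin 3) k).IsHomogeneous m := fun n m => by
    simpa using (isHomogeneous_X k n).pow m
  have h0 : ∀ (r : k) {p : MvPolynomial (Fin 3) k}, p.IsHomogeneous 3 →
      (C r * p).IsHomogeneous 3 := fun r p hp => by
    simpa using (isHomogeneous_C (Fin 3) r).mul hp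
  have h1 := isHomogeneous_X k (σ := Fin 3)
  unfold cub
  exact (((((((((h0 a (hX _ _)).add (h0 b ((hX _ _).mul (h1 _)))).add
    (h0 c ((hX _ _).mul (h1 _)))).add (h0 d ((h1 _).mul (hX _ _)))).add
    (h0 e (((h1 _).mul (h1 _)).mul (h1 _)))).add (h0 f ((h1 _).mul (hX _ _)))).add
    (h0 g (hX _ _))).add (h0 h ((hX _ _).mul (h1 _)))).add (h0 i ((h1 _).mul (hX _ _)))).add
    (h0 j (hX _ _))

theorem weierstrass_eq_cub (a b : k) :
    weierstrass a b = cub (-1) 0 0 0 0 (-a) 0 1 0 (-b) := by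
  simp [weierstrass, cub]; ring

theorem not_irr_mul {p q : MvPolynomial (Fin 3) k} (hp : eval 0 p = 0) (hq : eval 0 q = 0) :
    ¬ Irreducible (p * q) := by
  intro h
  rcases h.isUnit_or_isUnit rfl with h | h
  · have := h.map (eval (0 : Fin 3 → k)); rw [hp] at this; exact not_isUnit_zero this
  · have := h.map (eval (0 : Fin 3 → k)); rw [hq] at this; exact not_isUnit_zero this

end general

theorem common_zero {𝔽 : Type*} [RCLike 𝔽] {f g : MvPolynomial (Fin 3) 𝔽}
    (hf : f.IsHomogeneous 3) (hg : g.IsHomogeneous 3) :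
    ∃ v, v ≠ 0 ∧ eval v f = 0 ∧ eval v g = 0 := by
  rcases RCLike.I_eq_zero_or_im_I_eq_one (K := 𝔽) with hI | hI
  · have key : ∀ x : 𝔽, RCLike.re x = 0 → x = 0 := by
      intro x hx
      rw [← RCLike.re_add_im x, hx, hI]; simp
    have cont : ∀ p : MvPolynomial (Fin 3) 𝔽, Continuous fun v : Fin 3 → ℝ =>
        RCLike.re (eval (fun i => (v i : 𝔽)) p) := by
      intro p
      refine RCLike.continuous_re.comp ((MvPolynomial.continuous_eval p).comp ?_)
      exact continuous_pi fun i => RCLike.continuous_ofReal.comp (continuous_apply i)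
    have odd : ∀ p : MvPolynomial (Fin 3) 𝔽, p.IsHomogeneous 3 → ∀ v : Fin 3 → ℝ,
        RCLike.re (eval (fun i => ((-v) i : 𝔽)) p) = - RCLike.re (eval (fun i => (v i : 𝔽)) p) := by
      intro p hp v
      rw [← map_neg, ← eval_neg_of_hom hp]
      congr 2
      congr 1
      funext i
      simp
    obtain ⟨v, hv, h1, h2⟩ := bu_plane _ _ (cont f) (cont g) (odd f hf) (odd g hg)
    refine ⟨fun i => (v i : 𝔽), fun h => hv ?_, key _ h1, key _ h2⟩
    funext i
    have := congrFun h i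
    simpa using this
  · have e := RCLike.complexRingEquiv hI
    obtain ⟨v, hv, h1, h2⟩ := krull_plane (MvPolynomial.map e.toRingHom f)
      (MvPolynomial.map e.toRingHom g)
      (eval_zero_of_hom (hf.map _)) (eval_zero_of_hom (hg.map _))
    have key : ∀ p : MvPolynomial (Fin 3) 𝔽, eval v (MvPolynomial.map e.toRingHom p) = 0 →
        eval (fun i => e.symm (v i)) p = 0 := by
      intro p hp
      apply e.injective
      rw [map_zero, ← hp, eval_map]
      have := (MvPolynomial.eval₂_comp_left e.toRingHom (RingHom.id 𝔽) (fun i => e.symm (v i)) p)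
      rw [← MvPolynomial.eval₂_id]
      refine this.trans ?_
      congr 1
      funext i
      simp
    refine ⟨fun i => e.symm (v i), fun h => hv ?_, key _ h1, key _ h2⟩
    funext i
    have := congrFun h i
    simpa using this

section existence
variable {k : Type*} [Field k]

/-- Having a Weierstrass normal form. -/
def NF (Φ : MvPolynomial (Fin 3) k) : Prop :=
  ∃ (g : GL (Fin 3) k) (c a b : k), c ≠ 0 ∧ substMat (↑g) Φ = c • weierstrass a b

theorem NF_of_subst (M : Matrix (Fin 3) (Fin 3) k) (hM : M.det ≠ 0) {Φ : MvPolynomial (Fin 3) k}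
    (h : NF (substMat M Φ)) : NF Φ := by
  obtain ⟨g, c, a, b, hc, h⟩ := h
  refine ⟨Matrix.GeneralLinearGroup.mkOfDetNeZero M hM * g, c, a, b, hc, ?_⟩
  rw [← h, substMat_comp]; rfl

theorem irr_subst (M : Matrix (Fin 3) (Fin 3) k) (hM : M.det ≠ 0) {Φ : MvPolynomial (Fin 3) k}
    (h : Irreducible Φ) : Irreducible (substMat M Φ) :=
  (irreducible_substMat (Matrix.GeneralLinearGroup.mkOfDetNeZero M hM) Φ).2 h

theorem step [Infinite k] (M : Matrix (Fin 3) (Fin 3) k) (hM : M.det ≠ 0)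
    {Φ Ψ : MvPolynomial (Fin 3) k} (hI : Irreducible Φ)
    (h : ∀ v, eval (M.mulVec v) Φ = eval v Ψ) (hn : Irreducible Ψ → NF Ψ) : NF Φ := by
  have : substMat M Φ = Ψ := by
    apply MvPolynomial.funext
    intro v
    rw [eval_substMat, h]
  apply NF_of_subst M hM
  rw [this]
  apply hn
  rw [← this]
  exact irr_subst M hM hI

theorem flex1 [CharZero k] (a f h j : k) (ha : a ≠ 0) (hh : h ≠ 0) :
    NF (cub a 0 0 0 0 f 0 h 0 j) := by
  have hd : (!![1, 0, 0; 0, 1, 0; 0, 0, -a / h] : Matrix (Fin 3) (Fin 3) k).det ≠ 0 := by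
    rw [Matrix.det_fin_three]; simp [ha, hh]
  refine ⟨Matrix.GeneralLinearGroup.mkOfDetNeZero _ hd, -a, f * a / h ^ 2, - j * a ^ 2 / h ^ 3,
    neg_ne_zero.2 ha, ?_⟩
  apply MvPolynomial.funext
  intro v
  change eval v (substMat !![1, 0, 0; 0, 1, 0; 0, 0, -a / h] _) = _
  rw [eval_substMat, weierstrass_eq_cub, smul_eval, eval_cub, eval_cub]
  simp [Matrix.mulVec, dotProduct, Fin.sum_univ_three]
  field_simp
  ring

theorem flex2 [CharZero k] (a c e f h i j : k) (hh : h ≠ 0)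
    (hI : Irreducible (cub a 0 c 0 e f 0 h i j)) : NF (cub a 0 c 0 e f 0 h i j) := by
  have ha : a ≠ 0 := by
    rintro rfl
    refine not_irr_mul (p := X 2) (q := C c * X 0 ^ 2 + C e * (X 0 * X 1) + C f * (X 0 * X 2)
      + C h * X 1 ^ 2 + C i * (X 1 * X 2) + C j * X 2 ^ 2) (by simp) (by simp) ?_
    convert hI using 1
    simp [cub]; ring
  refine step !![1, 0, 0; -e / (2 * h), 1, -i / (2 * h); 0, 0, 1] ?_ hI
    (Ψ := cub a 0 (c - e ^ 2 / (4 * h)) 0 0 (f - e * i / (2 * h)) 0 h 0 (j - i ^ 2 / (4 * h)))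
    ?_ ?_
  · rw [Matrix.det_fin_three]; simp
  · intro v
    rw [eval_cub, eval_cub]
    simp [Matrix.mulVec, dotProduct, Fin.sum_univ_three]
    field_simp
    ring
  generalize (c - e ^ 2 / (4 * h)) = c'
  generalize (f - e * i / (2 * h)) = f'
  generalize (j - i ^ 2 / (4 * h)) = j'
  intro hI'
  refine step !![1, 0, - c' / (3 * a); 0, 1, 0; 0, 0, 1] ?_ hI'
    (Ψ := cub a 0 0 0 0 (f' - c' ^ 2 / (3 * a)) 0 h 0
      (j' + 2 * c' ^ 3 / (27 * a ^ 2) - f' * c' / (3 * a)))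
    ?_ ?_
  · rw [Matrix.det_fin_three]; simp
  · intro v
    rw [eval_cub, eval_cub]
    simp [Matrix.mulVec, dotProduct, Fin.sum_univ_three]
    field_simp
    ring
  intro _
  exact flex1 _ _ _ _ ha hh

theorem sing_fin [CharZero k] (β p r l : k) (hl : l ≠ 0) (hpr : p ≠ 0 ∨ r ≠ 0)
    (hI : Irreducible (cub 0 1 0 0 0 (l * (3 * p * r ^ 2 - β * p ^ 3)) 0 0 β
      (l * (r ^ 3 - 3 * β * p ^ 2 * r)))) :
    NF (cub 0 1 0 0 0 (l * (3 * p * r ^ 2 - β * p ^ 3)) 0 0 β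
      (l * (r ^ 3 - 3 * β * p ^ 2 * r))) := by
  obtain ⟨s, t, hst⟩ : ∃ s t, p * s + r * t = 1 := by
    rcases hpr with h | h
    · exact ⟨p⁻¹, 0, by simp [h]⟩
    · exact ⟨0, r⁻¹, by simp [h]⟩
  refine step !![1, 0, 0; l * p ^ 3, 1, 3 * l * p ^ 2 * r; 0, 0, 1] ?_ hI
    (Ψ := cub (l * p ^ 3) 1 (3 * l * p ^ 2 * r) 0 0 (3 * l * p * r ^ 2) 0 0 β (l * r ^ 3)) ?_ ?_
  · rw [Matrix.det_fin_three]; simp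
  · intro v
    rw [eval_cub, eval_cub]
    simp [Matrix.mulVec, dotProduct, Fin.sum_univ_three]
    ring
  intro hI'
  refine step !![s, r, 0; 0, 0, 1; t, -p, 0] ?_ hI'
    (Ψ := cub l 0 (s ^ 2 + β * t ^ 2) 0 (2 * s * r - 2 * β * t * p) 0 0 (r ^ 2 + β * p ^ 2) 0 0)
    ?_ ?_
  · rw [Matrix.det_fin_three]
    simp
    rw [show s * p + r * t = 1 by linear_combination hst]
    exact one_ne_zero
  · intro v
    have h3 : l * (p * (s * v 0 + r * v 1) + r * (t * v 0 - p * v 1)) ^ 3 = l * v 0 ^ 3 := by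
      rw [show p * (s * v 0 + r * v 1) + r * (t * v 0 - p * v 1) = v 0 by
        linear_combination v 0 * hst]
    rw [eval_cub, eval_cub]
    simp [Matrix.mulVec, dotProduct, Fin.sum_univ_three]
    linear_combination h3
  intro hI''
  refine flex2 _ _ _ _ _ _ _ ?_ hI''
  intro h0
  rw [h0] at hI''
  refine not_irr_mul (p := X 0) (q := C l * X 0 ^ 2 + C (s ^ 2 + β * t ^ 2) * (X 0 * X 2)
    + C (2 * s * r - 2 * β * t * p) * (X 1 * X 2)) (by simp) (by simp) ?_
  convert hI'' using 1
  simp only [cub, C_0]; ring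

end existence

section existence2
variable {𝔽 : Type*} [RCLike 𝔽]

theorem binary_root (a c f j : 𝔽) : ∃ p r : 𝔽, (p ≠ 0 ∨ r ≠ 0) ∧
    a * p ^ 3 + c * (p ^ 2 * r) + f * (p * r ^ 2) + j * r ^ 3 = 0 := by
  obtain ⟨v, hv, h1, h2⟩ := common_zero (isHomogeneous_cub a 0 c 0 0 f 0 0 0 j)
    (isHomogeneous_cub 0 0 0 0 0 0 (1 : 𝔽) 0 0 0)
  rw [eval_cub] at h1 h2
  have h3 : v 1 = 0 := by simpa using h2
  refine ⟨v 0, v 2, ?_, ?_⟩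
  · by_contra! h
    apply hv
    funext i
    fin_cases i
    · exact h.1
    · exact h3
    · exact h.2
  · rw [h3] at h1
    linear_combination h1

theorem sing0 (A β B : 𝔽) (hI : Irreducible (cub 0 1 0 0 0 A 0 0 β B)) :
    NF (cub 0 1 0 0 0 A 0 0 β B) := by
  have hAB : A ≠ 0 ∨ B ≠ 0 := by
    by_contra! h
    obtain ⟨rfl, rfl⟩ := h
    refine not_irr_mul (p := X 1) (q := X 0 ^ 2 + C β * X 2 ^ 2) (by simp) (by simp) ?_
    convert hI using 1
    simp [cub]; ring
  obtain ⟨p, r, l, hpr, hl, rfl, rfl⟩ : ∃ p r l : 𝔽, (p ≠ 0 ∨ r ≠ 0) ∧ l ≠ 0 ∧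
      l * (3 * p * r ^ 2 - β * p ^ 3) = A ∧ l * (r ^ 3 - 3 * β * p ^ 2 * r) = B := by
    by_cases hβ : β = 0
    · subst hβ
      have hB : B ≠ 0 := by
        rintro rfl
        refine not_irr_mul (p := X 0) (q := X 0 * X 1 + C A * X 2 ^ 2) (by simp) (by simp) ?_
        convert hI using 1
        simp [cub]; ring
      refine ⟨A / (3 * B), 1, B, Or.inr one_ne_zero, hB, ?_, ?_⟩
      · field_simp; ring
      · ring
    · obtain ⟨p, r, hpr, h⟩ := binary_root (-B * β) (3 * A * β) (3 * B) (-A)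
      have huv : 3 * p * r ^ 2 - β * p ^ 3 ≠ 0 ∨ r ^ 3 - 3 * β * p ^ 2 * r ≠ 0 := by
        by_contra! hc
        obtain ⟨h1, h2⟩ := hc
        have hp : β ^ 2 * p ^ 5 = 0 := by
          linear_combination ((3:𝔽) / 8 * r ^ 2 - β * p ^ 2) * h1 - (9 / 8 * p * r) * h2
        have hp0 : p = 0 := by simpa [hβ] using hp
        subst hp0
        have hr0 : r = 0 := by simpa using h2
        simp [hr0] at hpr
      rcases huv with hu | hu
      · refine ⟨p, r, A / (3 * p * r ^ 2 - β * p ^ 3), hpr, ?_, ?_, ?_⟩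
        · refine div_ne_zero ?_ hu
          rintro rfl
          have : B * (3 * p * r ^ 2 - β * p ^ 3) = 0 := by linear_combination h
          rcases mul_eq_zero.1 this with h' | h'
          · simp [h'] at hAB
          · exact hu h'
        · exact div_mul_cancel₀ _ hu
        · rw [div_mul_eq_mul_div, div_eq_iff hu]
          linear_combination -h
      · refine ⟨p, r, B / (r ^ 3 - 3 * β * p ^ 2 * r), hpr, ?_, ?_, ?_⟩
        · refine div_ne_zero ?_ hu
          rintro rfl
          have : A * (r ^ 3 - 3 * β * p ^ 2 * r) = 0 := by linear_combination -h
          rcases mul_eq_zero.1 this with h' | h'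
          · simp [h'] at hAB
          · exact hu h'
        · rw [div_mul_eq_mul_div, div_eq_iff hu]
          linear_combination h
        · exact div_mul_cancel₀ _ hu
  exact sing_fin β p r l hl hpr hI

theorem sing1 (a b c e f i j : 𝔽) (hb : b ≠ 0) (hI : Irreducible (cub a b c 0 e f 0 0 i j)) :
    NF (cub a b c 0 e f 0 0 i j) := by
  -- complete the square
  refine step !![1, 0, -e / (2 * b); 0, 1, 0; 0, 0, 1] ?_ hI
    (Ψ := cub a b (c - 3 * a * e / (2 * b)) 0 0
      (f - c * e / b + 3 * a * e ^ 2 / (4 * b ^ 2)) 0 0 (i - e ^ 2 / (4 * b))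
      (j - f * e / (2 * b) + c * e ^ 2 / (4 * b ^ 2) - a * e ^ 3 / (8 * b ^ 3))) ?_ ?_
  · rw [Matrix.det_fin_three]; simp
  · intro v
    rw [eval_cub, eval_cub]
    simp [Matrix.mulVec, dotProduct, Fin.sum_univ_three]
    field_simp
    ring
  generalize (c - 3 * a * e / (2 * b)) = c'
  generalize (f - c * e / b + 3 * a * e ^ 2 / (4 * b ^ 2)) = f'
  generalize (i - e ^ 2 / (4 * b)) = i'
  generalize (j - f * e / (2 * b) + c * e ^ 2 / (4 * b ^ 2) - a * e ^ 3 / (8 * b ^ 3)) = j'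
  intro hI'
  refine step !![1, 0, 0; -a / b, 1 / b, - c' / b; 0, 0, 1] ?_ hI'
    (Ψ := cub 0 1 0 0 0 (f' - i' / b * a) 0 0 (i' / b) (j' - i' / b * c')) ?_ ?_
  · rw [Matrix.det_fin_three]; simp [hb]
  · intro v
    rw [eval_cub, eval_cub]
    simp [Matrix.mulVec, dotProduct, Fin.sum_univ_three]
    field_simp
    ring
  exact sing0 _ _ _

theorem sing2 (a b c e f i j : 𝔽) (hI : Irreducible (cub a b c 0 e f 0 0 i j)) :
    NF (cub a b c 0 e f 0 0 i j) := by
  by_cases hb : b = 0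
  swap
  · exact sing1 _ _ _ _ _ _ _ hb hI
  subst hb
  by_cases hi : i = 0
  swap
  · refine step !![0, 0, 1; 0, 1, 0; 1, 0, 0] ?_ hI (Ψ := cub j i f 0 e c 0 0 0 a) ?_
      (sing1 _ _ _ _ _ _ _ hi)
    · rw [Matrix.det_fin_three]; simp
    · intro v
      rw [eval_cub, eval_cub]
      simp [Matrix.mulVec, dotProduct, Fin.sum_univ_three]
      ring
  subst hi
  by_cases he : e = 0
  swap
  · refine step !![1, 0, 0; 0, 1, 0; 1, 0, 1] ?_ hI
      (Ψ := cub (a + c + f + j) e (c + 2 * f + 3 * j) 0 e (f + 3 * j) 0 0 0 j) ?_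
      (sing1 _ _ _ _ _ _ _ he)
    · rw [Matrix.det_fin_three]; simp
    · intro v
      rw [eval_cub, eval_cub]
      simp [Matrix.mulVec, dotProduct, Fin.sum_univ_three]
      ring
  subst he
  exfalso
  obtain ⟨p, r, hpr, h⟩ := binary_root a c f j
  by_cases hp : p = 0
  · subst hp
    have hr : r ≠ 0 := by simpa using hpr
    have hj : j = 0 := by simpa [hr] using h
    subst hj
    refine not_irr_mul (p := X 0) (q := C a * X 0 ^ 2 + C c * (X 0 * X 2) + C f * X 2 ^ 2)
      (by simp) (by simp) ?_
    convert hI using 1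
    simp [cub]; ring
  · have ha : a = - (c * (r / p) + f * (r / p) ^ 2 + j * (r / p) ^ 3) := by
      field_simp
      linear_combination h
    generalize r / p = t at ha
    subst ha
    refine not_irr_mul (p := X 2 - C t * X 0) (q := C c * X 0 ^ 2
      + C f * (X 0 * X 2 + C t * X 0 ^ 2)
      + C j * (X 2 ^ 2 + C t * X 0 * X 2 + C t ^ 2 * X 0 ^ 2))
      (by simp) (by simp) ?_
    convert hI using 1
    simp only [cub, C_neg, C_add, C_mul, C_pow, C_0]; ring

theorem pderiv_three {k : Type*} [Field k] (i : Fin 3) :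
    pderiv i (3 : MvPolynomial (Fin 3) k) = 0 := by
  rw [← map_ofNat (C : k →+* MvPolynomial (Fin 3) k) 3]; exact pderiv_C

theorem pderiv_two {k : Type*} [Field k] (i : Fin 3) :
    pderiv i (2 : MvPolynomial (Fin 3) k) = 0 := by
  rw [← map_ofNat (C : k →+* MvPolynomial (Fin 3) k) 2]; exact pderiv_C

theorem eval_hess_cub (a b c d e f g h i j : 𝔽) :
    eval ![0, 1, 0] (hess (cub a b c d e f g h i j)) =
      2 * b * (6 * g * (2 * i) - 4 * h ^ 2) - 2 * d * (2 * d * (2 * i) - 2 * h * e)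
        + e * (2 * d * (2 * h) - 6 * g * e) := by
  unfold hess
  rw [Matrix.det_fin_three]
  simp [hessM, cub, pderiv_X, Derivation.leibniz, Derivation.leibniz_pow, Pi.single_apply, pderiv_three, pderiv_two]
  ring

theorem exists_nf {Φ : MvPolynomial (Fin 3) 𝔽} (hΦ : Φ.IsHomogeneous 3) (hI : Irreducible Φ) :
    NF Φ := by
  obtain ⟨P, hP, h1, h2⟩ := common_zero hΦ (isHomogeneous_hess hΦ)
  obtain ⟨M, hM, hMP⟩ : ∃ M : Matrix (Fin 3) (Fin 3) 𝔽, M.det ≠ 0 ∧ M.mulVec ![0, 1, 0] = P := by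
    have : P 0 ≠ 0 ∨ P 1 ≠ 0 ∨ P 2 ≠ 0 := by
      by_contra! h
      apply hP
      funext i
      fin_cases i
      · exact h.1
      · exact h.2.1
      · exact h.2.2
    rcases this with h | h | h
    · refine ⟨!![0, P 0, 0; 1, P 1, 0; 0, P 2, 1], ?_, ?_⟩
      · rw [Matrix.det_fin_three]; simp [h]
      · funext i
        fin_cases i <;> simp [Matrix.mulVec, dotProduct, Fin.sum_univ_three]
    · refine ⟨!![1, P 0, 0; 0, P 1, 0; 0, P 2, 1], ?_, ?_⟩
      · rw [Matrix.det_fin_three]; simp [h]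
      · funext i
        fin_cases i <;> simp [Matrix.mulVec, dotProduct, Fin.sum_univ_three]
    · refine ⟨!![1, P 0, 0; 0, P 1, 1; 0, P 2, 0], ?_, ?_⟩
      · rw [Matrix.det_fin_three]; simp [h]
      · funext i
        fin_cases i <;> simp [Matrix.mulVec, dotProduct, Fin.sum_univ_three]
  apply NF_of_subst M hM
  have hI' := irr_subst M hM hI
  have h1' : eval ![0, 1, 0] (substMat M Φ) = 0 := by rw [eval_substMat, hMP, h1]
  have h2' : eval ![0, 1, 0] (hess (substMat M Φ)) = 0 := by
    rw [hess_substMat, smul_eval, eval_substMat, hMP, h2, mul_zero]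
  obtain ⟨a, b, c, d, e, f, g, h, i, j, hc⟩ := exists_cub (isHomogeneous_substMat M hΦ)
  rw [hc] at h1' h2' hI' ⊢
  have hg : g = 0 := by
    rw [eval_cub] at h1'
    simpa using h1'
  subst hg
  rw [eval_hess_cub] at h2'
  have h3 : b * h ^ 2 + d ^ 2 * i - d * e * h = 0 := by linear_combination (-1/8) * h2'
  by_cases hh : h = 0
  · subst hh
    by_cases hd : d = 0
    · subst hd
      exact sing2 _ _ _ _ _ _ _ hI'
    · have hi : i = 0 := by simpa [hd] using h3
      subst hi
      refine step !![0, 0, 1; 0, 1, 0; 1, 0, 0] ?_ hI' (Ψ := cub j 0 f 0 e c 0 d b a) ?_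
        (flex2 _ _ _ _ _ _ _ hd)
      · rw [Matrix.det_fin_three]; simp
      · intro v
        rw [eval_cub, eval_cub]
        simp [Matrix.mulVec, dotProduct, Fin.sum_univ_three]
        ring
  · obtain ⟨t, rfl⟩ : ∃ t, d = t * h := ⟨d / h, by field_simp⟩
    have hb : b = t * e - t ^ 2 * i := by
      have : h ^ 2 * (b - (t * e - t ^ 2 * i)) = 0 := by linear_combination h3
      rcases mul_eq_zero.1 this with h' | h'
      · simp [hh] at h'
      · linear_combination h'
    subst hb
    refine step !![1, 0, 0; 0, 1, 0; -t, 0, 1] ?_ hI'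
      (Ψ := cub (a - c * t + f * t ^ 2 - j * t ^ 3) 0 (c - 2 * f * t + 3 * j * t ^ 2) 0
        (e - 2 * i * t) (f - 3 * j * t) 0 h i j) ?_
        (flex2 _ _ _ _ _ _ _ hh)
    · rw [Matrix.det_fin_three]; simp
    · intro v
      rw [eval_cub, eval_cub]
      simp [Matrix.mulVec, dotProduct, Fin.sum_univ_three]
      ring

end existence2

section uniq
variable {k : Type*} [Field k]

theorem exists_lin_aux (p q s : ℕ) (hd : p + q + s ≤ 1) (r : k) :
    ∃ a b c d, C r * (X 0 ^ p * X 1 ^ q * X 2 ^ s) =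
      (C a + C b * X 0 + C c * X 1 + C d * X 2 : MvPolynomial (Fin 3) k) := by
  obtain ⟨rfl, rfl, rfl⟩ | ⟨rfl, rfl, rfl⟩ | ⟨rfl, rfl, rfl⟩ | ⟨rfl, rfl, rfl⟩ :
    (p = 0 ∧ q = 0 ∧ s = 0) ∨ (p = 1 ∧ q = 0 ∧ s = 0) ∨ (p = 0 ∧ q = 1 ∧ s = 0) ∨
    (p = 0 ∧ q = 0 ∧ s = 1) := by omega
  · exact ⟨r, 0, 0, 0, by simp⟩
  · exact ⟨0, r, 0, 0, by simp⟩
  · exact ⟨0, 0, r, 0, by simp⟩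
  · exact ⟨0, 0, 0, r, by simp⟩

theorem exists_lin {Φ : MvPolynomial (Fin 3) k} (hΦ : Φ.totalDegree ≤ 1) :
    ∃ a b c d, Φ = C a + C b * X 0 + C c * X 1 + C d * X 2 := by
  have : ∃ a b c d, (∑ v ∈ Φ.support, monomial v (coeff v Φ)) =
      C a + C b * X 0 + C c * X 1 + C d * X 2 := by
    refine Finset.sum_induction _
      (fun Ψ => ∃ a b c d, Ψ = C a + C b * X 0 + C c * X 1 + C d * X 2) ?_ ?_ ?_
    · rintro _ _ ⟨a, b, c, d, rfl⟩ ⟨a', b', c', d', rfl⟩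
      exact ⟨a + a', b + b', c + c', d + d', by simp only [C_add]; ring⟩
    · exact ⟨0, 0, 0, 0, by simp⟩
    · intro m hm
      have hd : m 0 + m 1 + m 2 ≤ 1 := by
        have := (le_totalDegree hm).trans hΦ
        simpa [Finsupp.sum_fintype, Fin.sum_univ_three] using this
      have hmon : monomial m (coeff m Φ) =
          C (coeff m Φ) * (X 0 ^ m 0 * X 1 ^ m 1 * X 2 ^ m 2) := by
        rw [monomial_eq, Finsupp.prod_fintype _ _ (by simp), Fin.prod_univ_three]
      rw [hmon]
      exact exists_lin_aux _ _ _ hd _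
  rwa [← Φ.as_sum] at this

theorem eval_weierstrass (a b : k) (v : Fin 3 → k) : eval v (weierstrass a b) =
    v 1 ^ 2 * v 2 - v 0 ^ 3 - a * (v 0 * v 2 ^ 2) - b * v 2 ^ 3 := by
  simp [weierstrass]

theorem w_no_lin (a b : k) {p q : MvPolynomial (Fin 3) k} (h : weierstrass a b = p * q)
    (hp : p.totalDegree = 1) : False := by
  obtain ⟨α, β, γ, δ, rfl⟩ := exists_lin hp.le
  have key : ∀ x y z, α + β * x + γ * y + δ * z = 0 →
      y ^ 2 * z - x ^ 3 - a * (x * z ^ 2) - b * z ^ 3 = 0 := by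
    intro x y z h0
    have := congrArg (eval ![x, y, z]) h
    rw [eval_weierstrass, map_mul] at this
    simp [h0] at this
    exact this
  by_cases hγ : γ = 0
  · subst hγ
    by_cases hβ : β = 0
    · subst hβ
      by_cases hδ : δ = 0
      · subst hδ
        simp at hp
      · have h1 : ∀ x y, y ^ 2 * (-α / δ) - x ^ 3 - a * (x * (-α / δ) ^ 2) - b * (-α / δ) ^ 3 = 0 :=
          fun x y => key x y (-α / δ) (by field_simp; ring)
        have h00 := h1 0 0
        have h01 := h1 0 1
        have hz : -α / δ = 0 := by linear_combination h01 - h00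
        have h10 := h1 1 0
        rw [hz] at h10
        simp at h10
    · have h0 := key (-(α + δ) / β) 0 1 (by field_simp; ring)
      have h1 := key (-(α + δ) / β) 1 1 (by field_simp; ring)
      exact one_ne_zero (α := k) (by linear_combination h1 - h0)
  · have h0 := key 1 (-(α + β) / γ) 0 (by field_simp; ring)
    simp at h0

theorem irr_weierstrass (a b : k) : Irreducible (weierstrass a b) := by
  have hW0 : weierstrass a b ≠ 0 := by
    intro h
    have := congrArg (eval ![1, 0, 0]) h
    rw [eval_weierstrass] at this
    simp at this
  have hdeg : (weierstrass a b).totalDegree = 3 := by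
    refine IsHomogeneous.totalDegree ?_ hW0
    rw [weierstrass_eq_cub]
    exact isHomogeneous_cub ..
  constructor
  · intro h
    have := h.map (eval (0 : Fin 3 → k))
    rw [eval_weierstrass] at this
    simp at this
  · intro p q hpq
    have hp0 : p ≠ 0 := by rintro rfl; simp at hpq; exact hW0 hpq
    have hq0 : q ≠ 0 := by rintro rfl; simp at hpq; exact hW0 hpq
    have hd : p.totalDegree + q.totalDegree = 3 := by
      rw [← totalDegree_mul_of_isDomain hp0 hq0, ← hpq, hdeg]
    have unit_of : ∀ r : MvPolynomial (Fin 3) k, r ≠ 0 → r.totalDegree = 0 → IsUnit r := by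
      intro r hr h0
      rw [totalDegree_eq_zero_iff_eq_C] at h0
      rw [h0]
      refine IsUnit.map C (isUnit_iff_ne_zero.2 fun h => hr ?_)
      rw [h0, h, C_0]
    by_contra! hc
    have h1 : p.totalDegree ≠ 0 := fun h => hc.1 (unit_of p hp0 h)
    have h2 : q.totalDegree ≠ 0 := fun h => hc.2 (unit_of q hq0 h)
    obtain h | h : p.totalDegree = 1 ∨ q.totalDegree = 1 := by omega
    · exact w_no_lin a b hpq h
    · exact w_no_lin a b (hpq.trans (mul_comm _ _)) h

theorem hess_even (A c d f h j : k) : hess (cub A 0 c d 0 f 0 h 0 j) =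
    cub (8 * (3 * A * d * f - d * c ^ 2)) 0
      (8 * (9 * A * d * j + 3 * A * h * f - c * d * f - h * c ^ 2))
      (8 * (-3 * A * h ^ 2 - d ^ 2 * f + 2 * c * d * h)) 0
      (8 * (9 * A * h * j + 3 * c * d * j - h * c * f - d * f ^ 2)) 0
      (8 * (-c * h ^ 2 - 3 * d ^ 2 * j + 2 * d * h * f)) 0
      (8 * (3 * c * h * j - h * f ^ 2)) := by
  unfold hess
  rw [Matrix.det_fin_three]
  simp [hessM, cub, pderiv_X, Derivation.leibniz, Derivation.leibniz_pow, Pi.single_apply,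
    pderiv_three, pderiv_two]
  rw [show (C 8 : MvPolynomial (Fin 3) k) = 8 from map_ofNat C 8,
    show (C 9 : MvPolynomial (Fin 3) k) = 9 from map_ofNat C 9,
    show (C 3 : MvPolynomial (Fin 3) k) = 3 from map_ofNat C 3,
    show (C 2 : MvPolynomial (Fin 3) k) = 2 from map_ofNat C 2]
  ring

theorem hess_w (a b : k) : hess (weierstrass a b) =
    cub 0 0 (24 * a) 24 0 (72 * b) 0 0 0 (-8 * a ^ 2) := by
  rw [weierstrass_eq_cub, hess_even]
  congr 1 <;> ring

theorem pencil (a b n : k) : hess (weierstrass a b + n • hess (weierstrass a b)) =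
    (-576 * a * n + 41472 * b * n ^ 2 + 110592 * a ^ 2 * n ^ 3) • weierstrass a b
    + (1 + 576 * a * n ^ 2 - 13824 * b * n ^ 3) • hess (weierstrass a b) := by
  have add : ∀ a b c d e f g h i j a' b' c' d' e' f' g' h' i' j' : k,
      cub a b c d e f g h i j + cub a' b' c' d' e' f' g' h' i' j' = cub (a + a') (b + b')
        (c + c') (d + d') (e + e') (f + f') (g + g') (h + h') (i + i') (j + j') := by
    intros; simp only [cub, C_add]; ring
  have smul : ∀ r a b c d e f g h i j : k, r • cub a b c d e f g h i j =
      cub (r * a) (r * b) (r * c) (r * d) (r * e) (r * f) (r * g) (r * h) (r * i) (r * j) := by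
    intros; simp only [cub, C_mul, smul_eq_C_mul]; ring
  rw [hess_w, weierstrass_eq_cub, smul, smul, smul, add, add]
  simp only [mul_zero, add_zero]
  rw [hess_even]
  congr 1 <;> ring

theorem hess_stab {a b a' b' c : k} {M : Matrix (Fin 3) (Fin 3) k}
    (h : substMat M (weierstrass a b) = c • weierstrass a' b') :
    M.det ^ 2 • substMat M (hess (weierstrass a b)) = c ^ 3 • hess (weierstrass a' b') := by
  rw [← hess_substMat, h, hess_smul]

theorem uniq_core [CharZero k] {a b a' b' c : k} {M : Matrix (Fin 3) (Fin 3) k}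
    (hM : M.det ≠ 0) (hc : c ≠ 0)
    (h : substMat M (weierstrass a b) = c • weierstrass a' b') :
    ∃ t : k, t ≠ 0 ∧ a' = t ^ 4 * a ∧ b' = t ^ 6 * b := by
  set d := M.det with hd
  have hs := hess_stab h
  rw [← hd] at hs
  have eW : ∀ a b : k, eval ![1, 0, 0] (weierstrass a b) = -1 := by
    intro a b; rw [eval_weierstrass]; simp
  have eH : ∀ a b : k, eval ![1, 0, 0] (hess (weierstrass a b)) = 0 := by
    intro a b; rw [hess_w, eval_cub]; simp
  have eH' : eval ![1, 0, 0] (substMat M (hess (weierstrass a b))) = 0 := by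
    have := congrArg (eval ![1, 0, 0]) hs
    rw [smul_eval, smul_eval, eH] at this
    simpa [hM] using this
  have key : ∀ m : k, c ^ 3 * (-576 * a' * (m * c ^ 2) + 41472 * b' * (m * c ^ 2) ^ 2
      + 110592 * a' ^ 2 * (m * c ^ 2) ^ 3) = d ^ 2 * c * (-576 * a * (m * d ^ 2)
      + 41472 * b * (m * d ^ 2) ^ 2 + 110592 * a ^ 2 * (m * d ^ 2) ^ 3) := by
    intro m
    have h1 : substMat M (weierstrass a b + (m * d ^ 2) • hess (weierstrass a b)) =
        c • (weierstrass a' b' + (m * c ^ 2) • hess (weierstrass a' b')) := by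
      rw [map_add, map_smul, h, mul_smul, hs, smul_add, smul_smul, smul_smul]
      congr 2
      ring
    have h2 := hess_substMat M (weierstrass a b + (m * d ^ 2) • hess (weierstrass a b))
    rw [h1, hess_smul, pencil, pencil, map_add, map_smul, map_smul, h] at h2
    have h3 := congrArg (eval ![1, 0, 0]) h2
    simp only [smul_eval, map_add, eW, eH, eH'] at h3
    linear_combination -h3
  have k1 := key 1
  have k2 := key (-1)
  have k3 := key 2
  have hb : c ^ 7 * b' = c * d ^ 6 * b := by linear_combination (k1 + k2) / 82944
  have ha : c ^ 5 * a' = c * d ^ 4 * a := by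
    linear_combination (k3 - 8 * k1 + 165888 * hb) / 3456
  refine ⟨d / c, div_ne_zero hM hc, ?_, ?_⟩
  · field_simp
    apply mul_left_cancel₀ hc
    linear_combination ha
  · field_simp
    apply mul_left_cancel₀ hc
    linear_combination hb

theorem uniq [CharZero k] (Φ : MvPolynomial (Fin 3) k) (g g' : GL (Fin 3) k)
    (c c' a b a' b' : k) (hc : c ≠ 0) (hc' : c' ≠ 0)
    (h : substMat (↑g) Φ = c • weierstrass a b)
    (h' : substMat (↑g') Φ = c' • weierstrass a' b') :
    ∃ t : k, t ≠ 0 ∧ a' = t ^ 4 * a ∧ b' = t ^ 6 * b := by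
  have h1 : substMat (↑(g⁻¹ * g')) (c • weierstrass a b) = c' • weierstrass a' b' := by
    rw [← h, substMat_comp, ← Units.val_mul, mul_inv_cancel_left, h']
  have h2 : substMat (↑(g⁻¹ * g')) (weierstrass a b) = (c⁻¹ * c') • weierstrass a' b' := by
    rw [mul_smul, ← h1, map_smul, smul_smul, inv_mul_cancel₀ hc, one_smul]
  exact uniq_core (Matrix.GeneralLinearGroup.det_ne_zero _) (mul_ne_zero (inv_ne_zero hc) hc') h2

end uniq

section stab
variable {k : Type*} [Field k] [CharZero k]

theorem fix_y {a b c : k} (hab : (a, b) ≠ (0, 0)) (hc : c ≠ 0) {M : Matrix (Fin 3) (Fin 3) k}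
    (h : substMat M (weierstrass a b) = c • weierstrass a b)
    (h01 : M 0 1 = 0) (h11 : M 1 1 = 1) (h21 : M 2 1 = 0) :
    ∃ p : k, p ^ 12 = 1 ∧ M = !![p, 0, 0; 0, 1, 0; 0, 0, p ^ 3] := by
  have E : ∀ x y z : k, (M 1 0 * x + y + M 1 2 * z) ^ 2 * (M 2 0 * x + M 2 2 * z)
      - (M 0 0 * x + M 0 2 * z) ^ 3
      - a * ((M 0 0 * x + M 0 2 * z) * (M 2 0 * x + M 2 2 * z) ^ 2)
      - b * (M 2 0 * x + M 2 2 * z) ^ 3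
      = c * (y ^ 2 * z - x ^ 3 - a * (x * z ^ 2) - b * z ^ 3) := by
    intro x y z
    have := congrArg (eval ![x, y, z]) h
    rw [smul_eval, eval_substMat, eval_weierstrass, eval_weierstrass] at this
    simpa [Matrix.mulVec, dotProduct, Fin.sum_univ_three, h01, h11, h21] using this
  have hm : M 2 0 = 0 := by
    linear_combination (E 1 1 0 + E 1 (-1) 0 - 2 * E 1 0 0) / 2
  have hn : M 2 2 = c := by
    linear_combination (E 0 1 1 + E 0 (-1) 1 - 2 * E 0 0 1) / 2
  have hu : M 1 2 = 0 := by
    have : M 1 2 * c = 0 := by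
      have e1 := E 0 1 1
      have e2 := E 0 (-1) 1
      rw [hn] at e1 e2
      linear_combination (e1 - e2) / 4
    simpa [hc] using this
  have hs : M 1 0 = 0 := by
    have : M 1 0 * c = 0 := by
      have e1 := E 1 1 1
      have e2 := E 1 (-1) 1
      rw [hn, hu, hm] at e1 e2
      linear_combination (e1 - e2) / 4
    simpa [hc] using this
  rw [hm, hn, hu, hs] at E
  have hp : M 0 0 ^ 3 = c := by linear_combination - E 1 0 0
  have hp0 : M 0 0 ≠ 0 := by
    intro h0
    rw [h0] at hp
    exact hc (by simpa using hp.symm)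
  have hr : M 0 2 = 0 := by
    have : M 0 0 ^ 2 * M 0 2 = 0 := by
      linear_combination -(E 1 0 1 + E (-1) 0 1 - 2 * E 0 0 1) / 6
    simpa [hp0] using this
  rw [hr] at E
  have e0 : b * c ^ 3 = b * c := by linear_combination - E 0 0 1
  have e1 : a * M 0 0 * c ^ 2 = a * c := by linear_combination -E 1 0 1 + E 0 0 1 - hp
  refine ⟨M 0 0, ?_, ?_⟩
  · have : a ≠ 0 ∨ b ≠ 0 := by
      by_contra! hh
      exact hab (by rw [hh.1, hh.2])
    rcases this with ha | hb
    · have h1 : M 0 0 * c = 1 := by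
        apply mul_left_cancel₀ (mul_ne_zero ha hc)
        linear_combination e1
      rw [← hp] at h1
      calc M 0 0 ^ 12 = (M 0 0 * M 0 0 ^ 3) ^ 3 := by ring
        _ = 1 := by rw [h1, one_pow]
    · have h1 : c ^ 2 = 1 := by
        apply mul_left_cancel₀ (mul_ne_zero hb hc)
        linear_combination e0
      rw [← hp] at h1
      calc M 0 0 ^ 12 = ((M 0 0 ^ 3) ^ 2) ^ 2 := by ring
        _ = 1 := by rw [h1, one_pow]
  · rw [hp]
    refine Matrix.ext fun i j => ?_
    fin_cases i <;> fin_cases j <;> simp [h01, h11, h21, hm, hn, hu, hs, hr]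

theorem fin_roots {p : Polynomial k} (hp : p ≠ 0) : {x | p.eval x = 0}.Finite :=
  Polynomial.finite_setOf_isRoot hp

/-- The matrices fixing the point at infinity. -/
def Tset : Set (Matrix (Fin 3) (Fin 3) k) :=
  (fun p : k => !![p, 0, 0; 0, 1, 0; 0, 0, p ^ 3]) '' {p | p ^ 12 = 1}

theorem Tset_finite : (Tset (k := k)).Finite := by
  refine Set.Finite.image _ ?_
  refine (fin_roots (Polynomial.X_pow_sub_C_ne_zero (n := 12) (by norm_num) (1 : k))).subset ?_
  intro p hp
  have : p ^ 12 = 1 := hp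
  simp [this]

/-- Normalised flex vectors. -/
def Vset (a b : k) : Set (Fin 3 → k) :=
  {![0, 1, 0]} ∪ ⋃ x ∈ {x : k | 3 * x ^ 4 + 6 * a * x ^ 2 + 12 * b * x - a ^ 2 = 0},
    (fun y => ![x, y, 1]) '' {y : k | y ^ 2 = x ^ 3 + a * x + b}

theorem Vset_finite (a b : k) : (Vset a b).Finite := by
  refine (Set.finite_singleton _).union (Set.Finite.biUnion ?_ ?_)
  · let p : Polynomial k := Polynomial.C 3 * Polynomial.X ^ 4 + Polynomial.C (6 * a) *
      Polynomial.X ^ 2 + Polynomial.C (12 * b) * Polynomial.X - Polynomial.C (a ^ 2)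
    have hp : p ≠ 0 := by
      intro h
      have := congrArg (fun q => Polynomial.coeff q 4) h
      simp [p, Polynomial.coeff_X, Polynomial.coeff_X_pow, Polynomial.coeff_C,
        -map_mul, -map_pow, -Polynomial.C_mul, -Polynomial.C_pow] at this
    refine (fin_roots hp).subset ?_
    intro x hx
    have hx' : 3 * x ^ 4 + 6 * a * x ^ 2 + 12 * b * x - a ^ 2 = 0 := hx
    change p.eval x = 0
    rw [← hx']
    simp [p]
  · intro x _
    refine Set.Finite.image _ ?_
    refine (fin_roots (Polynomial.X_pow_sub_C_ne_zero (n := 2) (by norm_num)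
      (x ^ 3 + a * x + b))).subset ?_
    intro y hy
    have : y ^ 2 = x ^ 3 + a * x + b := hy
    simp [this]

theorem fiber_finite {a b : k} (hab : (a, b) ≠ (0, 0)) (v : Fin 3 → k) :
    {g : GL (Fin 3) k | (∃ c : k, c ≠ 0 ∧ substMat (↑g) (weierstrass a b) = c • weierstrass a b) ∧
      (g : Matrix (Fin 3) (Fin 3) k).mulVec ![0, 1, 0] = v}.Finite := by
  rcases Set.eq_empty_or_nonempty {g : GL (Fin 3) k | (∃ c : k, c ≠ 0 ∧
    substMat (↑g) (weierstrass a b) = c • weierstrass a b) ∧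
      (g : Matrix (Fin 3) (Fin 3) k).mulVec ![0, 1, 0] = v} with he | ⟨g0, ⟨c0, hc0, h0⟩, hv0⟩
  · rw [he]; exact Set.finite_empty
  have hfin : {g : GL (Fin 3) k | (g : Matrix (Fin 3) (Fin 3) k) ∈ Tset (k := k)}.Finite :=
    Tset_finite.preimage (Units.val_injective.injOn)
  refine (hfin.image (fun g => g0 * g)).subset ?_
  rintro g ⟨⟨c, hc, h⟩, hv⟩
  refine ⟨g0⁻¹ * g, ?_, by simp⟩
  have hinv : substMat (↑g0⁻¹) (weierstrass a b) = c0⁻¹ • weierstrass a b := by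
    have : substMat (↑g0⁻¹) (substMat (↑g0) (weierstrass a b)) = weierstrass a b := by
      rw [substMat_comp, ← Units.val_mul, mul_inv_cancel]
      exact substMat_one _
    rw [h0, map_smul] at this
    rw [← this, smul_smul, inv_mul_cancel₀ hc0, one_smul, this]
  have hh : substMat (↑(g0⁻¹ * g)) (weierstrass a b) = (c0⁻¹ * c) • weierstrass a b := by
    rw [Units.val_mul, ← substMat_comp, hinv, map_smul, h, smul_smul]
  have hcol : (↑(g0⁻¹ * g) : Matrix (Fin 3) (Fin 3) k).mulVec ![0, 1, 0] = ![0, 1, 0] := by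
    rw [Units.val_mul, ← Matrix.mulVec_mulVec, hv, ← hv0, Matrix.mulVec_mulVec, ← Units.val_mul,
      inv_mul_cancel]
    simp
  have c1 := congrFun hcol 0
  have c2 := congrFun hcol 1
  have c3 := congrFun hcol 2
  simp only [Matrix.mulVec, dotProduct, Fin.sum_univ_three] at c1 c2 c3
  obtain ⟨p, hp, hM⟩ := fix_y hab (mul_ne_zero (inv_ne_zero hc0) hc) hh
    (by simpa using c1) (by simpa using c2) (by simpa using c3)
  exact ⟨p, hp, hM.symm⟩

/-- scalar matrix -/
def scal (r : k) (hr : r ≠ 0) : GL (Fin 3) k :=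
  Matrix.GeneralLinearGroup.mkOfDetNeZero (r • (1 : Matrix (Fin 3) (Fin 3) k)) (by simp [hr])

theorem scal_val (r : k) (hr : r ≠ 0) :
    (scal r hr : Matrix (Fin 3) (Fin 3) k) = r • (1 : Matrix (Fin 3) (Fin 3) k) := rfl

theorem scal_center (r : k) (hr : r ≠ 0) : scal r hr ∈ Subgroup.center (GL (Fin 3) k) := by
  rw [Subgroup.mem_center_iff]
  intro g
  apply Units.ext
  rw [Units.val_mul, Units.val_mul, scal_val]
  simp

theorem substMat_scal (r : k) (a b : k) :
    substMat (r • (1 : Matrix (Fin 3) (Fin 3) k)) (weierstrass a b) = r ^ 3 • weierstrass a b := by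
  apply MvPolynomial.funext
  intro v
  rw [eval_substMat, smul_eval, eval_weierstrass, eval_weierstrass]
  simp [Matrix.smul_mulVec]
  ring

theorem stab_finite {a b : k} (hab : (a, b) ≠ (0, 0)) :
    (projStabilizer (weierstrass a b)).Finite := by
  have hfin := (Vset_finite a b).biUnion (fun v _ => fiber_finite hab v)
  refine (hfin.image QuotientGroup.mk).subset ?_
  rintro _ ⟨g, ⟨c, hc, h⟩, rfl⟩
  set v := (g : Matrix (Fin 3) (Fin 3) k).mulVec ![0, 1, 0] with hv
  have hdet : (g : Matrix (Fin 3) (Fin 3) k).det ≠ 0 := Matrix.GeneralLinearGroup.det_ne_zero g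
  have h1 : eval v (weierstrass a b) = 0 := by
    rw [hv, ← eval_substMat, h, smul_eval, eval_weierstrass]; simp
  have h2 : eval v (hess (weierstrass a b)) = 0 := by
    have := congrArg (eval ![0, 1, 0]) (hess_stab h)
    rw [smul_eval, smul_eval, eval_substMat, ← hv, hess_w, eval_cub _ _ _ _ _ _ _ _ _ _ ![0, 1, 0]]
      at this
    rw [hess_w]
    simpa [hdet] using this
  have hv0 : v ≠ 0 := by
    intro h0
    have : (![0, 1, 0] : Fin 3 → k) = 0 := by
      apply Matrix.eq_zero_of_mulVec_eq_zero hdet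
      rw [← hv, h0]
    have := congrFun this 1
    simp at this
  rw [eval_weierstrass] at h1
  rw [hess_w, eval_cub] at h2
  -- rescaling
  have main : ∀ r : k, r ≠ 0 → r • v ∈ Vset a b →
      (QuotientGroup.mk g : GL (Fin 3) k ⧸ Subgroup.center (GL (Fin 3) k)) ∈ QuotientGroup.mk ''
      ⋃ v ∈ Vset a b, {g : GL (Fin 3) k | (∃ c : k, c ≠ 0 ∧
        substMat (↑g) (weierstrass a b) = c • weierstrass a b) ∧
        (g : Matrix (Fin 3) (Fin 3) k).mulVec ![0, 1, 0] = v} := by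
    intro r hr hrv
    refine ⟨g * scal r hr, ?_, QuotientGroup.mk_mul_of_mem _ (scal_center r hr)⟩
    refine Set.mem_biUnion hrv ⟨⟨c * r ^ 3, mul_ne_zero hc (pow_ne_zero _ hr), ?_⟩, ?_⟩
    · rw [Units.val_mul, ← substMat_comp, h, map_smul, scal_val, substMat_scal, smul_smul]
    · rw [Units.val_mul, scal_val, hv]
      simp [Matrix.smul_mulVec]
  by_cases hz : v 2 = 0
  · have hx : v 0 = 0 := by
      rw [hz] at h1
      simpa using h1
    have hy : v 1 ≠ 0 := by
      intro hy
      apply hv0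
      funext i
      fin_cases i
      · exact hx
      · exact hy
      · exact hz
    apply main (v 1)⁻¹ (inv_ne_zero hy)
    left
    change _ = _
    funext i
    fin_cases i <;> simp [hx, hy, hz]
  · apply main (v 2)⁻¹ (inv_ne_zero hz)
    right
    have e1 : (v 1 / v 2) ^ 2 = (v 0 / v 2) ^ 3 + a * (v 0 / v 2) + b := by
      field_simp
      linear_combination h1
    refine Set.mem_biUnion (x := v 0 / v 2) ?_ ⟨v 1 / v 2, e1, ?_⟩
    · change 3 * (v 0 / v 2) ^ 4 + 6 * a * (v 0 / v 2) ^ 2 + 12 * b * (v 0 / v 2) - a ^ 2 = 0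
      have e2 : 24 * a * (v 0 / v 2) ^ 2 + 24 * (v 0 / v 2) * (v 1 / v 2) ^ 2
          + 72 * b * (v 0 / v 2) - 8 * a ^ 2 = 0 := by
        have e3 : (24 * a * (v 0 ^ 2 * v 2) + 24 * (v 0 * v 1 ^ 2) + 72 * b * (v 0 * v 2 ^ 2)
            - 8 * a ^ 2 * v 2 ^ 3) * (v 2)⁻¹ ^ 3 = 0 := by
          linear_combination (v 2)⁻¹ ^ 3 * h2
        have e4 : v 2 * (v 2)⁻¹ = 1 := mul_inv_cancel₀ hz
        simp only [div_eq_mul_inv]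
        generalize (v 2)⁻¹ = w at *
        linear_combination e3 - (24 * a * v 0 ^ 2 * w ^ 2) * e4
          - 72 * b * v 0 * w * (v 2 * w + 1) * e4
          + 8 * a ^ 2 * (v 2 ^ 2 * w ^ 2 + v 2 * w + 1) * e4
      linear_combination e2 / 8 - 3 * (v 0 / v 2) * e1
    · funext i
      fin_cases i
      · simp; field_simp
      · simp; field_simp
      · simp [hz]

/-- diagonal elements -/
def dg (n : ℕ) : GL (Fin 3) k :=
  Matrix.GeneralLinearGroup.mkOfDetNeZero
    !![(n : k) + 1, 0, 0; 0, 1, 0; 0, 0, ((n : k) + 1) ^ 3] (by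
      rw [Matrix.det_fin_three]
      simp
      exact_mod_cast Nat.succ_ne_zero n)

theorem dg_val (n : ℕ) : ((dg n : GL (Fin 3) k) : Matrix (Fin 3) (Fin 3) k) =
  !![(n : k) + 1, 0, 0; 0, 1, 0; 0, 0, ((n : k) + 1) ^ 3] := rfl

theorem stab_infinite : ¬ (projStabilizer (weierstrass (0 : k) 0)).Finite := by
  refine Set.infinite_of_injective_forall_mem
    (f := fun n : ℕ => (QuotientGroup.mk (dg n) :
      GL (Fin 3) k ⧸ Subgroup.center (GL (Fin 3) k))) ?_ ?_
  · intro m n hmn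
    have hmn' := QuotientGroup.eq.1 hmn
    rw [Subgroup.mem_center_iff] at hmn'
    set z := (dg m : GL (Fin 3) k)⁻¹ * dg n with hz
    have h1 : (dg m : GL (Fin 3) k) * z = dg n := by rw [hz]; simp
    let N : GL (Fin 3) k := Matrix.GeneralLinearGroup.mkOfDetNeZero
      !![1, 1, 0; 0, 1, 0; 0, 0, 1] (by rw [Matrix.det_fin_three]; simp)
    have hN : (N : Matrix (Fin 3) (Fin 3) k) = !![1, 1, 0; 0, 1, 0; 0, 0, 1] := rfl
    have h2 := congrArg (fun g : GL (Fin 3) k => (g : Matrix (Fin 3) (Fin 3) k) 0 1) (hmn' N)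
    have h3 := congrArg (fun g : GL (Fin 3) k => (g : Matrix (Fin 3) (Fin 3) k) 0 0) h1
    have h4 := congrArg (fun g : GL (Fin 3) k => (g : Matrix (Fin 3) (Fin 3) k) 1 1) h1
    simp only [Units.val_mul, Matrix.mul_apply, Fin.sum_univ_three, dg_val, hN] at h2 h3 h4
    simp at h2 h3 h4
    have h5 : (z : Matrix (Fin 3) (Fin 3) k) 0 0 = 1 := by linear_combination h4 - h2
    rw [h5] at h3
    simpa using h3
  · intro n
    refine ⟨dg n, ⟨((n : k) + 1) ^ 3, pow_ne_zero _ (by exact_mod_cast Nat.succ_ne_zero n), ?_⟩,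
      rfl⟩
    apply MvPolynomial.funext
    intro v
    rw [eval_substMat, smul_eval, eval_weierstrass, eval_weierstrass, dg_val]
    simp [Matrix.mulVec, dotProduct, Fin.sum_univ_three]
    ring

end stab

/-- **Statement 10.** Let `𝔽` be `ℝ` or `ℂ`.  A homogeneous cubic `Φ ∈ 𝔽[x,y,z]` is
irreducible iff it can be brought, by an `𝔽`-linear change of coordinates and a nonzero
scalar, to the normal form `y²z − x³ − a xz² − b z³`.  Moreover (a) the pair `(a, b)` is
unique up to `(a, b) ↦ (t⁴a, t⁶b)`, `t ≠ 0`; and (b) the curve `y²z = x³ + a xz² + b z³`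
has finite stabilizer in `PGL₃(𝔽)` iff `(a, b) ≠ (0, 0)`. -/
theorem cubic_normal_form {𝔽 : Type*} [RCLike 𝔽] :
    (∀ Φ : MvPolynomial (Fin 3) 𝔽, Φ.IsHomogeneous 3 →
      (Irreducible Φ ↔ ∃ (g : GL (Fin 3) 𝔽) (c a b : 𝔽), c ≠ 0 ∧
        substMat (↑g) Φ = c • weierstrass a b)) ∧
    (∀ Φ : MvPolynomial (Fin 3) 𝔽, Φ.IsHomogeneous 3 →
      ∀ (g g' : GL (Fin 3) 𝔽) (c c' a b a' b' : 𝔽), c ≠ 0 → c' ≠ 0 →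
        substMat (↑g) Φ = c • weierstrass a b →
        substMat (↑g') Φ = c' • weierstrass a' b' →
        ∃ t : 𝔽, t ≠ 0 ∧ a' = t ^ 4 * a ∧ b' = t ^ 6 * b) ∧
    (∀ a b : 𝔽, (projStabilizer (weierstrass a b)).Finite ↔ (a, b) ≠ (0, 0)) := by
  refine ⟨fun Φ hΦ => ⟨fun hI => exists_nf hΦ hI, ?_⟩, ?_, ?_⟩
  · rintro ⟨g, c, a, b, hc, h⟩
    rw [← irreducible_substMat g, h, smul_eq_C_mul]
    exact (irreducible_isUnit_mul (IsUnit.map C (isUnit_iff_ne_zero.2 hc))).2 (irr_weierstrass a b)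
  · intro Φ _ g g' c c' a b a' b' hc hc' h h'
    exact uniq Φ g g' c c' a b a' b' hc hc' h h'
  · intro a b
    constructor
    · rintro h hab
      obtain ⟨rfl, rfl⟩ := Prod.mk.inj hab
      exact stab_infinite h
    · exact stab_finite
end
end

section
/- Every irreducible real cubic curve has a real flex point: if Φ ∈ ℝ[x,y,z] is an irreducible homogeneous polynomial of degree 3, then there exists p ∈ ℝ³ ∖ {0} with Φ(p) = 0, (∂Φ/∂x(p), ∂Φ/∂y(p), ∂Φ/∂z(p)) ≠ (0,0,0), and det H_Φ(p) = 0, where H_Φ is the 3×3 Hessian matrix of second partial derivatives of Φ. Likewise, every irreducible homogeneous cubic Φ ∈ ℂ[x,y,z] has a point p ∈ ℂ³ ∖ {0} with Φ(p) = 0, ∇Φ(p) ≠ 0, and det H_Φ(p) = 0. -/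
open MvPolynomial

namespace FlexAux

theorem real_odd (f : Polynomial ℝ) (hf : Odd f.natDegree) : ∃ x, f.eval x = 0 := by
  have key : ∀ g : Polynomial ℝ, Odd g.natDegree → 0 < g.leadingCoeff → ∃ x, g.eval x = 0 := by
    intro g hg hl
    have hd : 0 < g.degree := Polynomial.natDegree_pos_iff_degree_pos.mp hg.pos
    have h1 := g.tendsto_atTop_of_leadingCoeff_nonneg hd hl.le
    have hdn : (g.comp (-Polynomial.X)).natDegree = g.natDegree := by
      simp [Polynomial.natDegree_comp]
    have h2 := (g.comp (-Polynomial.X)).tendsto_atBot_of_leadingCoeff_nonpos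
      (Polynomial.natDegree_pos_iff_degree_pos.mp (hdn ▸ hg.pos))
      (by
        rw [Polynomial.leadingCoeff_comp (by simp)]
        simp [hg.neg_one_pow, hl.le])
    obtain ⟨a, ha⟩ := (h1.eventually (Filter.eventually_ge_atTop 0)).exists
    obtain ⟨b, hb⟩ := (h2.eventually (Filter.eventually_le_atBot 0)).exists
    have hb' : g.eval (-b) ≤ 0 := by simpa using hb
    exact mem_range_of_exists_le_of_exists_ge g.continuous ⟨_, hb'⟩ ⟨_, ha⟩
  rcases lt_trichotomy f.leadingCoeff 0 with h | h | h
  · obtain ⟨x, hx⟩ := key (-f) (by simpa using hf) (by simpa using h)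
    exact ⟨x, by simpa using hx⟩
  · rw [Polynomial.leadingCoeff_eq_zero] at h
    simp [h] at hf
  · exact key f hf h

theorem complex_odd (f : Polynomial ℂ) (hf : Odd f.natDegree) : ∃ x, f.eval x = 0 :=
  IsAlgClosed.exists_root f
    (ne_of_gt (Polynomial.natDegree_pos_iff_degree_pos.mp hf.pos))

section
variable {k : Type*} [Field k]

/-- hypothesis: odd degree polynomials have roots -/
def OddRoots (k : Type*) [Field k] : Prop :=
  ∀ f : Polynomial k, Odd f.natDegree → ∃ x, f.eval x = 0

theorem root9 (h : OddRoots k) (n0 n1 n2 n3 n4 n5 n6 n7 n8 n9 : k) (h9 : n9 ≠ 0) :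
    ∃ y, n9*y^9 + n8*y^8 + n7*y^7 + n6*y^6 + n5*y^5 + n4*y^4 + n3*y^3 + n2*y^2 + n1*y + n0 = 0 := by
  have hd : (Polynomial.C n9*Polynomial.X^9 + Polynomial.C n8*Polynomial.X^8 + Polynomial.C n7*Polynomial.X^7 + Polynomial.C n6*Polynomial.X^6 + Polynomial.C n5*Polynomial.X^5 + Polynomial.C n4*Polynomial.X^4 + Polynomial.C n3*Polynomial.X^3
    + Polynomial.C n2*Polynomial.X^2 + Polynomial.C n1*Polynomial.X + Polynomial.C n0 : Polynomial k).natDegree = 9 := by compute_degree!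
  obtain ⟨y, hy⟩ := h _ (by rw [hd]; decide)
  exact ⟨y, by simpa using hy⟩

theorem root3 (h : OddRoots k) (n0 n1 n2 n3 : k) :
    ∃ x y, (x ≠ 0 ∨ y ≠ 0) ∧ n0*x^3 + n1*x^2*y + n2*x*y^2 + n3*y^3 = 0 := by
  by_cases h3 : n3 = 0
  · exact ⟨0, 1, by simp, by simp [h3]⟩
  have hd : (Polynomial.C n3*Polynomial.X^3 + Polynomial.C n2*Polynomial.X^2
    + Polynomial.C n1*Polynomial.X + Polynomial.C n0 : Polynomial k).natDegree = 3 := by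
    compute_degree!
  obtain ⟨y, hy⟩ := h _ (by rw [hd]; decide)
  refine ⟨1, y, by simp, ?_⟩
  simp at hy
  linear_combination hy

/-- linear substitution -/
noncomputable def sub (M : Matrix (Fin 3) (Fin 3) k) :
    MvPolynomial (Fin 3) k →ₐ[k] MvPolynomial (Fin 3) k :=
  aeval (fun i => ∑ j, C (M i j) * X j)

theorem eval_sub (M : Matrix (Fin 3) (Fin 3) k) (p : Fin 3 → k) (f : MvPolynomial (Fin 3) k) :
    eval p (sub M f) = eval (M.mulVec p) f := by
  induction f using MvPolynomial.induction_on with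
  | C a => simp [sub]
  | add f g hf hg => simp [hf, hg]
  | mul_X f i hf =>
    rw [map_mul, map_mul, hf, map_mul]
    simp [sub, Matrix.mulVec, dotProduct]

theorem sub_comp (M N : Matrix (Fin 3) (Fin 3) k) (h : N * M = 1) (f : MvPolynomial (Fin 3) k) :
    sub M (sub N f) = f := by
  induction f using MvPolynomial.induction_on with
  | C a => simp [sub]
  | add f g hf hg => simp [hf, hg]
  | mul_X f i hf =>
    rw [map_mul, map_mul, hf]
    congr 1
    have : ∀ j, N i 0 * M 0 j + N i 1 * M 1 j + N i 2 * M 2 j = (1 : Matrix (Fin 3) (Fin 3) k) i j := by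
      intro j; rw [← h]; simp [Matrix.mul_apply, Fin.sum_univ_three]
    have e : sub M (sub N (X i)) = ∑ j, C (N i 0 * M 0 j + N i 1 * M 1 j + N i 2 * M 2 j) * X j := by
      simp [sub, Fin.sum_univ_three]
      ring
    rw [e]
    simp only [this]
    simp [Matrix.one_apply]

theorem pderiv_sub (M : Matrix (Fin 3) (Fin 3) k) (j : Fin 3) (f : MvPolynomial (Fin 3) k) :
    pderiv j (sub M f) = ∑ i, C (M i j) * sub M (pderiv i f) := by
  induction f using MvPolynomial.induction_on with
  | C a => simp [sub]
  | add f g hf hg => simp [hf, hg, mul_add, Finset.sum_add_distrib]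
  | mul_X f i hf =>
    have hX : pderiv j (sub M (X i)) = C (M i j) := by
      simp [sub, pderiv_X, Pi.single_apply]
    rw [map_mul, pderiv_mul, hf, hX]
    simp only [pderiv_mul, map_add, map_mul, mul_add, Finset.sum_add_distrib]
    congr 1
    · rw [Finset.sum_mul]; exact Finset.sum_congr rfl fun _ _ => by ring
    · simp only [pderiv_X, Pi.single_apply]
      rw [Finset.sum_eq_single i]
      · simp; ring
      · intro b _ hb; simp [hb.symm]
      · simp

/-- Hessian at p -/
noncomputable def hess (f : MvPolynomial (Fin 3) k) (p : Fin 3 → k) : Matrix (Fin 3) (Fin 3) k :=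
  Matrix.of fun i j => eval p (pderiv i (pderiv j f))

theorem hess_sub (M : Matrix (Fin 3) (Fin 3) k) (f : MvPolynomial (Fin 3) k) (p : Fin 3 → k) :
    hess (sub M f) p = M.transpose * hess f (M.mulVec p) * M := by
  ext i j
  simp only [hess, Matrix.of_apply, Matrix.mul_apply, Matrix.transpose_apply, pderiv_sub, map_sum,
    pderiv_mul, pderiv_C, zero_mul, zero_add, map_mul, eval_C, eval_sub]
  refine Finset.sum_congr rfl fun a _ => ?_
  rw [Finset.mul_sum, Finset.sum_mul]
  refine Finset.sum_congr rfl fun b _ => ?_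
  ring

def Flex (f : MvPolynomial (Fin 3) k) : Prop :=
  ∃ p : Fin 3 → k, p ≠ 0 ∧ eval p f = 0 ∧ (∃ i, eval p (pderiv i f) ≠ 0) ∧ (hess f p).det = 0

def WFlex (f : MvPolynomial (Fin 3) k) : Prop :=
  ∃ p : Fin 3 → k, p ≠ 0 ∧ eval p f = 0 ∧ (hess f p).det = 0

theorem mulVec_ne {M N : Matrix (Fin 3) (Fin 3) k} (h : N * M = 1) {p : Fin 3 → k} (hp : p ≠ 0) :
    M.mulVec p ≠ 0 := by
  intro h0
  apply hp
  have : N.mulVec (M.mulVec p) = p := by rw [Matrix.mulVec_mulVec, h, Matrix.one_mulVec]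
  rw [← this, h0, Matrix.mulVec_zero]

theorem det_ne {M N : Matrix (Fin 3) (Fin 3) k} (h : N * M = 1) : M.det ≠ 0 := by
  intro h0
  have := congrArg Matrix.det h
  simp [h0] at this

theorem hess_det_zero {M N : Matrix (Fin 3) (Fin 3) k} (h : N * M = 1)
    {f : MvPolynomial (Fin 3) k} {p : Fin 3 → k} (h0 : (hess (sub M f) p).det = 0) :
    (hess f (M.mulVec p)).det = 0 := by
  rw [hess_sub] at h0
  simpa [det_ne h] using h0

theorem WFlex.of_sub {M : Matrix (Fin 3) (Fin 3) k} (N : Matrix (Fin 3) (Fin 3) k) (h : N * M = 1)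
    {f : MvPolynomial (Fin 3) k} (hf : WFlex (sub M f)) : WFlex f := by
  obtain ⟨p, hp, h1, h2⟩ := hf
  exact ⟨M.mulVec p, mulVec_ne h hp, by rwa [eval_sub] at h1, hess_det_zero h h2⟩

theorem Flex.of_sub {M : Matrix (Fin 3) (Fin 3) k} (N : Matrix (Fin 3) (Fin 3) k) (h : N * M = 1)
    {f : MvPolynomial (Fin 3) k} (hf : Flex (sub M f)) : Flex f := by
  obtain ⟨p, hp, h1, ⟨i, hi⟩, h2⟩ := hf
  refine ⟨M.mulVec p, mulVec_ne h hp, by rwa [eval_sub] at h1, ?_, hess_det_zero h h2⟩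
  by_contra! hc
  apply hi
  simp [pderiv_sub, eval_sub, hc]

theorem hom_sub (M : Matrix (Fin 3) (Fin 3) k) {f : MvPolynomial (Fin 3) k}
    (hf : f.IsHomogeneous 3) : (sub M f).IsHomogeneous 3 := by
  have := hf.aeval (fun i => ∑ j, C (M i j) * X j) (n := 1)
    (fun i => IsHomogeneous.sum _ _ _ fun j _ => isHomogeneous_C_mul_X _ _)
  rw [one_mul] at this
  exact this

theorem irr_sub {M : Matrix (Fin 3) (Fin 3) k} (N : Matrix (Fin 3) (Fin 3) k) (h : N * M = 1)
    {f : MvPolynomial (Fin 3) k} (hf : Irreducible f) : Irreducible (sub M f) := by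
  have h' : M * N = 1 := mul_eq_one_comm.mp h
  let E : MvPolynomial (Fin 3) k ≃ₐ[k] MvPolynomial (Fin 3) k :=
    AlgEquiv.ofAlgHom (sub M) (sub N) (AlgHom.ext fun x => sub_comp M N h x)
      (AlgHom.ext fun x => sub_comp N M h' x)
  exact (MulEquiv.irreducible_iff E).mpr hf

noncomputable def F (a b c : ℕ) : Fin 3 →₀ ℕ := Finsupp.equivFunOnFinite.symm ![a, b, c]

theorem F_inj (a b c a' b' c' : ℕ) : F a b c = F a' b' c' ↔ a = a' ∧ b = b' ∧ c = c' := by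
  constructor
  · intro h
    exact ⟨DFunLike.congr_fun h 0, DFunLike.congr_fun h 1, DFunLike.congr_fun h 2⟩
  · rintro ⟨rfl, rfl, rfl⟩; rfl

theorem mon_F (a b c : ℕ) (r : k) : monomial (F a b c) r = C r * X 0 ^ a * X 1 ^ b * X 2 ^ c := by
  rw [monomial_eq, Finsupp.prod_fintype _ _ (by simp)]
  simp [Fin.prod_univ_three, F, mul_assoc]

noncomputable def cub (c0 c1 c2 c3 q0 q1 q2 l0 l1 m : k) : MvPolynomial (Fin 3) k :=
  C c0 * X 0 ^ 3 + C c1 * X 0 ^ 2 * X 1 + C c2 * X 0 * X 1 ^ 2 + C c3 * X 1 ^ 3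
  + X 2 * (C q0 * X 0 ^ 2 + C q1 * X 0 * X 1 + C q2 * X 1 ^ 2)
  + X 2 ^ 2 * (C l0 * X 0 + C l1 * X 1) + C m * X 2 ^ 3

theorem exists_cub {f : MvPolynomial (Fin 3) k} (hf : f.IsHomogeneous 3) :
    ∃ c0 c1 c2 c3 q0 q1 q2 l0 l1 m, f = cub c0 c1 c2 c3 q0 q1 q2 l0 l1 m := by
  refine ⟨coeff (F 3 0 0) f, coeff (F 2 1 0) f, coeff (F 1 2 0) f, coeff (F 0 3 0) f,
    coeff (F 2 0 1) f, coeff (F 1 1 1) f, coeff (F 0 2 1) f, coeff (F 1 0 2) f,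
    coeff (F 0 1 2) f, coeff (F 0 0 3) f, ?_⟩
  have e : ∀ c0 c1 c2 c3 q0 q1 q2 l0 l1 m : k, cub c0 c1 c2 c3 q0 q1 q2 l0 l1 m =
      monomial (F 3 0 0) c0 + monomial (F 2 1 0) c1 + monomial (F 1 2 0) c2 + monomial (F 0 3 0) c3
      + monomial (F 2 0 1) q0 + monomial (F 1 1 1) q1 + monomial (F 0 2 1) q2
      + monomial (F 1 0 2) l0 + monomial (F 0 1 2) l1 + monomial (F 0 0 3) m := by
    intros; simp only [mon_F, cub]; ring
  rw [e]
  ext d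
  obtain ⟨a, b, c, rfl⟩ : ∃ a b c, d = F a b c := ⟨d 0, d 1, d 2, by
    ext i; fin_cases i <;> rfl⟩
  simp only [coeff_add, coeff_monomial, F_inj]
  by_cases hd : a + b + c = 3
  · have ha : a ≤ 3 := by omega
    have hb : b ≤ 3 := by omega
    obtain rfl : c = 3 - a - b := by omega
    interval_cases a <;> interval_cases b <;> first | omega | simp
  · rw [hf.coeff_eq_zero]
    · have : ∀ a' b' c', a' + b' + c' = 3 → ¬ (a' = a ∧ b' = b ∧ c' = c) := by
        intros; omega
      simp [this]
    · simpa [Finsupp.degree_eq_sum, Fin.sum_univ_three, F] using hd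

theorem eval_cub (c0 c1 c2 c3 q0 q1 q2 l0 l1 m x y z : k) :
    eval ![x, y, z] (cub c0 c1 c2 c3 q0 q1 q2 l0 l1 m) =
    c0*x^3 + c1*x^2*y + c2*x*y^2 + c3*y^3 + z*(q0*x^2+q1*x*y+q2*y^2) + z^2*(l0*x+l1*y) + m*z^3 := by
  simp [cub]

theorem dx_cub (c0 c1 c2 c3 q0 q1 q2 l0 l1 m : k) :
    pderiv 0 (cub c0 c1 c2 c3 q0 q1 q2 l0 l1 m) =
    C (3*c0) * X 0 ^ 2 + C (2*c1) * X 0 * X 1 + C c2 * X 1 ^ 2 + X 2 * (C (2*q0) * X 0 + C q1 * X 1)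
      + C l0 * X 2 ^ 2 := by
  have h2 : (C 2 : MvPolynomial (Fin 3) k) = 2 := map_ofNat C 2
  have h3 : (C 3 : MvPolynomial (Fin 3) k) = 3 := map_ofNat C 3
  simp [cub, pderiv_X, h2, h3]
  ring

theorem dy_cub (c0 c1 c2 c3 q0 q1 q2 l0 l1 m : k) :
    pderiv 1 (cub c0 c1 c2 c3 q0 q1 q2 l0 l1 m) =
    C c1 * X 0 ^ 2 + C (2*c2) * X 0 * X 1 + C (3*c3) * X 1 ^ 2 + X 2 * (C q1 * X 0 + C (2*q2) * X 1)
      + C l1 * X 2 ^ 2 := by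
  have h2 : (C 2 : MvPolynomial (Fin 3) k) = 2 := map_ofNat C 2
  have h3 : (C 3 : MvPolynomial (Fin 3) k) = 3 := map_ofNat C 3
  simp [cub, pderiv_X, h2, h3]
  ring

theorem dz_cub (c0 c1 c2 c3 q0 q1 q2 l0 l1 m : k) :
    pderiv 2 (cub c0 c1 c2 c3 q0 q1 q2 l0 l1 m) =
    C q0 * X 0 ^ 2 + C q1 * X 0 * X 1 + C q2 * X 1 ^ 2 + X 2 * (C (2*l0) * X 0 + C (2*l1) * X 1)
      + C (3*m) * X 2 ^ 2 := by
  have h2 : (C 2 : MvPolynomial (Fin 3) k) = 2 := map_ofNat C 2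
  have h3 : (C 3 : MvPolynomial (Fin 3) k) = 3 := map_ofNat C 3
  simp [cub, pderiv_X, h2, h3]
  ring

theorem hess_cub (c0 c1 c2 c3 q0 q1 q2 l0 l1 m x y z : k) :
    hess (cub c0 c1 c2 c3 q0 q1 q2 l0 l1 m) ![x, y, z] =
    !![6*c0*x+2*c1*y+2*q0*z, 2*c1*x+2*c2*y+q1*z, 2*q0*x+q1*y+2*l0*z;
       2*c1*x+2*c2*y+q1*z, 2*c2*x+6*c3*y+2*q2*z, q1*x+2*q2*y+2*l1*z;
       2*q0*x+q1*y+2*l0*z, q1*x+2*q2*y+2*l1*z, 2*l0*x+2*l1*y+6*m*z] := by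
  ext i j
  fin_cases i <;> fin_cases j <;>
  simp [hess, dx_cub, dy_cub, dz_cub, pderiv_X] <;> ring

theorem hess_det_cub (c0 c1 c2 c3 q0 q1 q2 l0 l1 m x y z : k) :
    (hess (cub c0 c1 c2 c3 q0 q1 q2 l0 l1 m) ![x, y, z]).det =
    (6*c0*x+2*c1*y+2*q0*z)*((2*c2*x+6*c3*y+2*q2*z)*(2*l0*x+2*l1*y+6*m*z)-(q1*x+2*q2*y+2*l1*z)^2)
    - (2*c1*x+2*c2*y+q1*z)*((2*c1*x+2*c2*y+q1*z)*(2*l0*x+2*l1*y+6*m*z)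
        -(q1*x+2*q2*y+2*l1*z)*(2*q0*x+q1*y+2*l0*z))
    + (2*q0*x+q1*y+2*l0*z)*((2*c1*x+2*c2*y+q1*z)*(q1*x+2*q2*y+2*l1*z)
        -(2*c2*x+6*c3*y+2*q2*z)*(2*q0*x+q1*y+2*l0*z)) := by
  rw [hess_cub, Matrix.det_fin_three]
  simp
  ring

theorem WFlex.of_det {M : Matrix (Fin 3) (Fin 3) k} (h : M.det ≠ 0)
    {f : MvPolynomial (Fin 3) k} (hf : WFlex (sub M f)) : WFlex f :=
  hf.of_sub M⁻¹ (Matrix.nonsing_inv_mul _ (Ne.isUnit h))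

theorem Flex.of_det {M : Matrix (Fin 3) (Fin 3) k} (h : M.det ≠ 0)
    {f : MvPolynomial (Fin 3) k} (hf : Flex (sub M f)) : Flex f :=
  hf.of_sub M⁻¹ (Matrix.nonsing_inv_mul _ (Ne.isUnit h))

theorem irr_det {M : Matrix (Fin 3) (Fin 3) k} (h : M.det ≠ 0)
    {f : MvPolynomial (Fin 3) k} (hf : Irreducible f) : Irreducible (sub M f) :=
  irr_sub M⁻¹ (Matrix.nonsing_inv_mul _ (Ne.isUnit h)) hf

theorem sub_shift (c0 c1 c2 c3 q0 q1 q2 l0 l1 a b : k) :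
    sub !![1, 0, 0; 0, 1, 0; a, b, 1] (cub c0 c1 c2 c3 q0 q1 q2 l0 l1 0) =
    cub (c0 + a*q0 + a^2*l0) (c1 + a*q1 + b*q0 + a^2*l1 + 2*a*b*l0)
      (c2 + a*q2 + b*q1 + b^2*l0 + 2*a*b*l1) (c3 + b*q2 + b^2*l1)
      (q0 + 2*a*l0) (q1 + 2*b*l0 + 2*a*l1) (q2 + 2*b*l1) l0 l1 0 := by
  have h2 : (C 2 : MvPolynomial (Fin 3) k) = 2 := map_ofNat C 2
  simp [sub, cub, Fin.sum_univ_three, h2]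
  ring

theorem sub_block (c0 c1 c2 c3 q0 q1 q2 l0 l1 a b c d : k) :
    sub !![a, b, 0; c, d, 0; 0, 0, 1] (cub c0 c1 c2 c3 q0 q1 q2 l0 l1 0) =
    cub (c0*a^3 + c1*a^2*c + c2*a*c^2 + c3*c^3)
      (3*c0*a^2*b + c1*(a^2*d+2*a*b*c) + c2*(2*a*c*d+b*c^2) + 3*c3*c^2*d)
      (3*c0*a*b^2 + c1*(2*a*b*d+b^2*c) + c2*(a*d^2+2*b*c*d) + 3*c3*c*d^2)
      (c0*b^3 + c1*b^2*d + c2*b*d^2 + c3*d^3)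
      (q0*a^2 + q1*a*c + q2*c^2) (2*q0*a*b + q1*(a*d+b*c) + 2*q2*c*d) (q0*b^2 + q1*b*d + q2*d^2)
      (a*l0 + c*l1) (b*l0 + d*l1) 0 := by
  have h2 : (C 2 : MvPolynomial (Fin 3) k) = 2 := map_ofNat C 2
  have h3 : (C 3 : MvPolynomial (Fin 3) k) = 3 := map_ofNat C 3
  simp [sub, cub, Fin.sum_univ_three, h2, h3]
  ring

theorem noline {c0 c1 c2 c3 q0 q1 q2 s t : k} (hi : Irreducible (cub c0 c1 c2 c3 q0 q1 q2 0 0 0))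
    (hst : s ≠ 0 ∨ t ≠ 0) (hc : c0*s^3 + c1*s^2*t + c2*s*t^2 + c3*t^3 = 0)
    (hq : q0*s^2 + q1*s*t + q2*t^2 = 0) : False := by
  have base : ∀ c1 c2 c3 q1 q2 : k, ¬ Irreducible (cub 0 c1 c2 c3 0 q1 q2 0 0 0) := by
    intro c1 c2 c3 q1 q2 h
    have e : cub 0 c1 c2 c3 0 q1 q2 0 0 0 = X 1 * (C c1 * X 0 ^ 2 + C c2 * X 0 * X 1 + C c3 * X 1 ^ 2
        + X 2 * (C q1 * X 0 + C q2 * X 1)) := by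
      simp [cub]; ring
    rcases h.isUnit_or_isUnit e with h | h
    · have := h.map (eval (0 : Fin 3 → k))
      simp at this
    · have := h.map (eval (0 : Fin 3 → k))
      simp at this
  obtain ⟨b, d, hbd⟩ : ∃ b d, s * d - b * t ≠ 0 := by
    rcases hst with h | h
    · exact ⟨0, 1, by simpa using h⟩
    · exact ⟨1, 0, by simpa using h⟩
  have hM : (!![s, b, 0; t, d, 0; 0, 0, 1] : Matrix (Fin 3) (Fin 3) k).det ≠ 0 := by
    simpa [Matrix.det_fin_three] using hbd
  have := irr_det hM hi
  rw [sub_block, hc, hq] at this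
  simp only [mul_zero, add_zero] at this
  exact base _ _ _ _ _ this

variable [CharZero k]

theorem flex_nodal (hk : OddRoots k) {c0 c1 c2 c3 q0 q1 q2 : k}
    (hi : Irreducible (cub c0 c1 c2 c3 q0 q1 q2 0 0 0))
    (e1 : 6*q2*c0 - 2*q1*c1 + 2*q0*c2 = 0) (e2 : 2*q2*c1 - 2*q1*c2 + 6*q0*c3 = 0) :
    Flex (cub c0 c1 c2 c3 q0 q1 q2 0 0 0) := by
  obtain ⟨s, t, hst, hc⟩ := root3 hk c0 c1 c2 c3
  refine ⟨![s, t, 0], ?_, ?_, ⟨2, ?_⟩, ?_⟩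
  · intro h
    have h0 := congrFun h 0
    have h1 := congrFun h 1
    simp at h0 h1
    simp [h0, h1] at hst
  · rw [eval_cub]; linear_combination hc
  · intro h
    refine noline hi hst hc ?_
    simpa [dz_cub] using h
  · rw [hess_det_cub]
    linear_combination (-4*(q0*s^2+q1*s*t+q2*t^2))*(s*e1+t*e2) + 6*(4*q0*q2-q1^2)*hc

theorem flex_cusp {c0 c1 c2 c3 q0 : k} (hq : q0 ≠ 0)
    (hi : Irreducible (cub c0 c1 c2 c3 q0 0 0 0 0 0)) :
    Flex (cub c0 c1 c2 c3 q0 0 0 0 0 0) := by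
  have h3 : c3 ≠ 0 := by
    rintro rfl
    exact noline hi (s := 0) (t := 1) (by simp) (by simp) (by simp)
  obtain ⟨y, hy⟩ : ∃ y, c2 + 3 * c3 * y = 0 := ⟨-c2 / (3 * c3), by field_simp; ring⟩
  obtain ⟨z, hz⟩ : ∃ z, z * q0 = -(c0 + c1*y + c2*y^2 + c3*y^3) :=
    ⟨-(c0 + c1*y + c2*y^2 + c3*y^3) / q0, by field_simp⟩
  refine ⟨![1, y, z], ?_, ?_, ⟨2, ?_⟩, ?_⟩
  · intro h
    simpa using congrFun h 0
  · rw [eval_cub]; linear_combination hz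
  · simpa [dz_cub] using hq
  · rw [hess_det_cub]
    linear_combination (-8*q0^2)*hy

theorem flex_sing (hk : OddRoots k) {c0 c1 c2 c3 q0 q1 q2 : k}
    (hi : Irreducible (cub c0 c1 c2 c3 q0 q1 q2 0 0 0)) :
    Flex (cub c0 c1 c2 c3 q0 q1 q2 0 0 0) := by
  by_cases hD : 4*q0*q2 - q1^2 = 0
  · by_cases h0 : q0 = 0
    · subst h0
      have h1 : q1 = 0 := by simpa using hD
      subst h1
      have h2 : q2 ≠ 0 := by
        rintro rfl
        obtain ⟨s, t, hst, hc⟩ := root3 hk c0 c1 c2 c3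
        exact noline hi hst hc (by simp)
      have hM : (!![0, 1, 0; 1, 0, 0; 0, 0, 1] : Matrix (Fin 3) (Fin 3) k).det ≠ 0 := by
        simp [Matrix.det_fin_three]
      have := irr_det hM hi
      refine Flex.of_det hM ?_
      rw [sub_block] at this ⊢
      simp only [mul_zero, add_zero, zero_mul, mul_one, zero_add, one_pow, zero_pow, ne_eq,
        OfNat.ofNat_ne_zero, not_false_eq_true] at this ⊢
      exact flex_cusp h2 this
    · obtain ⟨b, hb⟩ : ∃ b, 2*q0*b + q1 = 0 := ⟨-q1 / (2*q0), by field_simp; ring⟩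
      have hb2 : q0*b^2 + q1*b*1 + q2*1^2 = 0 := by
        apply mul_left_cancel₀ (mul_ne_zero (show (4:k) ≠ 0 by norm_num) h0)
        linear_combination (2*q0*b+q1)*hb + hD
      have hM : (!![1, b, 0; 0, 1, 0; 0, 0, 1] : Matrix (Fin 3) (Fin 3) k).det ≠ 0 := by
        simp [Matrix.det_fin_three]
      have := irr_det hM hi
      refine Flex.of_det hM ?_
      have hb1 : 2*q0*1*b + q1*(1*1+b*0) + 2*q2*0*1 = 0 := by linear_combination hb
      rw [sub_block, hb2, hb1] at this ⊢
      simp only [mul_zero, add_zero] at this ⊢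
      exact flex_cusp (by simpa using h0) this
  · obtain ⟨a, ha⟩ : ∃ a, 2*(4*q0*q2 - q1^2)*a + (6*q2*c0 - 2*q1*c1 + 2*q0*c2) = 0 :=
      ⟨-(6*q2*c0 - 2*q1*c1 + 2*q0*c2) / (2*(4*q0*q2 - q1^2)), by field_simp; ring⟩
    obtain ⟨b, hb⟩ : ∃ b, 2*(4*q0*q2 - q1^2)*b + (2*q2*c1 - 2*q1*c2 + 6*q0*c3) = 0 :=
      ⟨-(2*q2*c1 - 2*q1*c2 + 6*q0*c3) / (2*(4*q0*q2 - q1^2)), by field_simp; ring⟩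
    have hM : (!![1, 0, 0; 0, 1, 0; a, b, 1] : Matrix (Fin 3) (Fin 3) k).det ≠ 0 := by
      simp [Matrix.det_fin_three]
    have := irr_det hM hi
    refine Flex.of_det hM ?_
    rw [sub_shift] at this ⊢
    simp only [mul_zero, add_zero] at this ⊢
    exact flex_nodal hk this (by linear_combination ha) (by linear_combination hb)

theorem wflex_A (hk : OddRoots k) (c0 c1 c2 c3 e : k) :
    WFlex (cub c0 c1 c2 c3 0 0 e 1 0 0) := by
  by_cases he : e = 0
  · refine ⟨![0, 0, 1], ?_, ?_, ?_⟩
    · intro h; simpa using congrFun h 2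
    · rw [eval_cub]; simp
    · rw [hess_det_cub]; subst he; ring
  by_cases hK : e^4*c1 + 2*e^2*c2*c3 + 2*c3^3 = 0
  · obtain ⟨z, hz⟩ : ∃ z, e*z + c3 = 0 := ⟨-c3/e, by field_simp; ring⟩
    refine ⟨![0, 1, z], ?_, ?_, ?_⟩
    · intro h; simpa using congrFun h 1
    · rw [eval_cub]; linear_combination hz
    · rw [hess_det_cub]
      obtain rfl : c3 = -(e*z) := by linear_combination hz
      have : e^3 * (e*c1 - 2*c2*z - 2*z^3) = 0 := by linear_combination hK
      have h4 : e*c1 - 2*c2*z - 2*z^3 = 0 := by simpa [he] using this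
      linear_combination (-8*e)*h4
  obtain ⟨y, hy⟩ := root9 hk
    ((1)*c1^4 + (-8)*c0*c1^2*c2 + (16)*c0^2*c2^2 + (16)*e^2*c0^3)
    ((-24)*c0*c1^2*c3 + (96)*c0^2*c2*c3 + (48)*e^2*c0^2*c1)
    ((-12)*c1^3*c3 + (48)*c0*c1*c2*c3 + (144)*c0^2*c3^2 + (60)*e^2*c0*c1^2)
    ((-8)*c1^2*c2*c3 + (32)*c0*c2^2*c3 + (144)*c0*c1*c3^2 + (24)*e^2*c1^3 + (64)*e^2*c0*c1*c2 + (-96)*e^2*c0^2*c3)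
    ((30)*c1^2*c3^2 + (120)*c0*c2*c3^2 + (54)*e^2*c1^2*c2 + (24)*e^2*c0*c2^2 + (-72)*e^2*c0*c1*c3 + (24)*e^4*c0^2)
    ((48)*c1*c2*c3^2 + (72)*c0*c3^3 + (48)*e^2*c1*c2^2 + (6)*e^2*c1^2*c3 + (-48)*e^2*c0*c2*c3 + (24)*e^4*c0*c1)
    ((16)*c2^2*c3^2 + (36)*c1*c3^3 + (16)*e^2*c2^3 + (28)*e^2*c1*c2*c3 + (-60)*e^2*c0*c3^2 + (3)*e^4*c1^2 + (16)*e^4*c0*c2)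
    ((24)*c2*c3^3 + (24)*e^2*c2^2*c3 + (-12)*e^2*c1*c3^2 + (24)*e^4*c0*c3)
    ((9)*c3^4 + (6)*e^2*c2*c3^2 + (-3)*e^4*c2^2 + (6)*e^4*c1*c3 + (-3)*e^6*c0)
    ((-2)*e^2*c3^3 + (-2)*e^4*c2*c3 + (-1)*e^6*c1)
    (by
      intro h
      apply hK
      apply mul_left_cancel₀ (pow_ne_zero 2 he)
      linear_combination -h)
  obtain ⟨c, hc⟩ : ∃ c, c = c0 + c1*y + c2*y^2 + c3*y^3 := ⟨_, rfl⟩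
  obtain ⟨B, hB⟩ : ∃ B, B = -8*e^3*y^4 + 32*e*c := ⟨_, rfl⟩
  obtain ⟨A, hA⟩ : ∃ A, A = -8*e*(e*y^2)*c + (8*c2+24*c3*y)*c
    + (6*c0+2*c1*y)*(4*c2+12*c3*y-4*e^2*y^2) - 2*(2*c1+2*c2*y)^2 := ⟨_, rfl⟩
  have hN : A^2 - A*B*(e*y^2) + B^2*c = 0 := by
    subst hA hB hc
    linear_combination 64*hy
  have fin : ∀ z, z^2 + e*y^2*z + c = 0 → A + B*z = 0 → WFlex (cub c0 c1 c2 c3 0 0 e 1 0 0) := by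
    intro z h1 h2
    refine ⟨![1, y, z], ?_, ?_, ?_⟩
    · intro h; simpa using congrFun h 0
    · rw [eval_cub]; linear_combination h1 - hc
    · rw [hess_det_cub]
      subst hA hB hc
      linear_combination h2 + (-8*e*z - 8*c2 - 24*c3*y + 8*e*(e*y^2))*h1
  by_cases hB0 : B = 0
  · have hA0 : A = 0 := by simpa [hB0] using hN
    refine fin (-(e*y^2)/2) ?_ (by simp [hA0, hB0])
    have : e * (4*c - e^2*y^4) = 0 := by
      apply mul_left_cancel₀ (show (8:k) ≠ 0 by norm_num)
      linear_combination hB0 - hB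
    have h4 : 4*c - e^2*y^4 = 0 := by simpa [he] using this
    linear_combination h4/4
  · refine fin (-A/B) ?_ (by field_simp; ring)
    field_simp
    linear_combination hN

theorem wflex_B (hk : OddRoots k) (c0 c1 c2 c3 q0 q1 q2 : k) :
    WFlex (cub c0 c1 c2 c3 q0 q1 q2 1 0 0) := by
  have hM : (!![1, 0, 0; 0, 1, 0; -q0/2, -q1/2, 1] : Matrix (Fin 3) (Fin 3) k).det ≠ 0 := by
    simp [Matrix.det_fin_three]
  refine WFlex.of_det hM ?_
  have h0 : q0 + 2*(-q0/2)*1 = 0 := by ring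
  have h1 : q1 + 2*(-q1/2)*1 + 2*(-q0/2)*0 = 0 := by ring
  rw [sub_shift, h0, h1]
  exact wflex_A hk _ _ _ _ _

theorem wflex_C (hk : OddRoots k) (c0 c1 c2 c3 q0 q1 q2 l0 l1 : k) :
    WFlex (cub c0 c1 c2 c3 q0 q1 q2 l0 l1 0) := by
  by_cases h0 : l0 = 0
  · by_cases h1 : l1 = 0
    · refine ⟨![0, 0, 1], ?_, ?_, ?_⟩
      · intro h; simpa using congrFun h 2
      · rw [eval_cub]; simp
      · rw [hess_det_cub]; subst h0 h1; ring
    · have hM : (!![0, 1, 0; l1⁻¹, 0, 0; 0, 0, 1] : Matrix (Fin 3) (Fin 3) k).det ≠ 0 := by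
        simp [Matrix.det_fin_three, h1]
      refine WFlex.of_det hM ?_
      have e0 : 0*l0 + l1⁻¹*l1 = 1 := by field_simp; ring
      have e1 : 1*l0 + 0*l1 = 0 := by simp [h0]
      rw [sub_block, e0, e1]
      exact wflex_B hk _ _ _ _ _ _ _
  · have hM : (!![l0⁻¹, -l1/l0, 0; 0, 1, 0; 0, 0, 1] : Matrix (Fin 3) (Fin 3) k).det ≠ 0 := by
      simp [Matrix.det_fin_three, h0]
    refine WFlex.of_det hM ?_
    have e0 : l0⁻¹*l0 + 0*l1 = 1 := by field_simp; ring
    have e1 : -l1/l0*l0 + 1*l1 = 0 := by field_simp; ring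
    rw [sub_block, e0, e1]
    exact wflex_B hk _ _ _ _ _ _ _

theorem exists_mat (p : Fin 3 → k) (hp : p ≠ 0) :
    ∃ M : Matrix (Fin 3) (Fin 3) k, M.det ≠ 0 ∧ M.mulVec ![0, 0, 1] = p := by
  by_cases h2 : p 2 = 0
  · by_cases h1 : p 1 = 0
    · by_cases h0 : p 0 = 0
      · exact absurd (by ext i; fin_cases i <;> simp [h0, h1, h2]) hp
      · refine ⟨!![0, 0, p 0; 1, 0, p 1; 0, 1, p 2], by simp [Matrix.det_fin_three, h0], ?_⟩
        ext i; fin_cases i <;> simp [Matrix.mulVec, dotProduct, Fin.sum_univ_three]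
    · refine ⟨!![1, 0, p 0; 0, 0, p 1; 0, 1, p 2], by simp [Matrix.det_fin_three, h1], ?_⟩
      ext i; fin_cases i <;> simp [Matrix.mulVec, dotProduct, Fin.sum_univ_three]
  · refine ⟨!![1, 0, p 0; 0, 1, p 1; 0, 0, p 2], by simp [Matrix.det_fin_three, h2], ?_⟩
    ext i; fin_cases i <;> simp [Matrix.mulVec, dotProduct, Fin.sum_univ_three]

theorem wflex_D (hk : OddRoots k) {f : MvPolynomial (Fin 3) k} (hf : f.IsHomogeneous 3) :
    WFlex f := by
  obtain ⟨p, hp, h0⟩ : ∃ p : Fin 3 → k, p ≠ 0 ∧ eval p f = 0 := by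
    obtain ⟨c0, c1, c2, c3, q0, q1, q2, l0, l1, m, rfl⟩ := exists_cub hf
    obtain ⟨s, t, hst, hc⟩ := root3 hk c0 c1 c2 c3
    refine ⟨![s, t, 0], ?_, by rw [eval_cub]; linear_combination hc⟩
    intro h
    have h0 := congrFun h 0
    have h1 := congrFun h 1
    simp at h0 h1
    simp [h0, h1] at hst
  obtain ⟨M, hM, hMp⟩ := exists_mat p hp
  refine WFlex.of_det hM ?_
  have hh := hom_sub M hf
  have he := eval_sub M ![0, 0, 1] f
  rw [hMp, h0] at he
  obtain ⟨c0, c1, c2, c3, q0, q1, q2, l0, l1, m, e⟩ := exists_cub hh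
  rw [e] at he ⊢
  rw [eval_cub] at he
  obtain rfl : m = 0 := by simpa using he
  exact wflex_C hk _ _ _ _ _ _ _ _ _

theorem flex_T (hk : OddRoots k) {f : MvPolynomial (Fin 3) k} (hf : f.IsHomogeneous 3)
    (hi : Irreducible f) {p : Fin 3 → k} (hp : p ≠ 0) (h0 : eval p f = 0)
    (hs : ∀ i, eval p (pderiv i f) = 0) : Flex f := by
  obtain ⟨M, hM, hMp⟩ := exists_mat p hp
  refine Flex.of_det hM ?_
  have hh := hom_sub M hf
  have hi' := irr_det hM hi
  have he := eval_sub M ![0, 0, 1] f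
  rw [hMp, h0] at he
  have hd : ∀ j, eval ![0, 0, 1] (pderiv j (sub M f)) = 0 := by
    intro j
    simp [pderiv_sub, eval_sub, hMp, hs]
  obtain ⟨c0, c1, c2, c3, q0, q1, q2, l0, l1, m, e⟩ := exists_cub hh
  rw [e] at he hd hi' ⊢
  rw [eval_cub] at he
  obtain rfl : m = 0 := by simpa using he
  obtain rfl : l0 = 0 := by simpa [dx_cub] using hd 0
  obtain rfl : l1 = 0 := by simpa [dy_cub] using hd 1
  exact flex_sing hk hi'

theorem main (hk : OddRoots k) {f : MvPolynomial (Fin 3) k} (hf : f.IsHomogeneous 3)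
    (hi : Irreducible f) : Flex f := by
  obtain ⟨p, hp, h0, hh⟩ := wflex_D hk hf
  by_cases hs : ∃ i, eval p (pderiv i f) ≠ 0
  · exact ⟨p, hp, h0, hs, hh⟩
  · push Not at hs
    exact flex_T hk hf hi hp h0 hs

end

end FlexAux

/-- **Statement 11.** Every irreducible real (and every irreducible complex) cubic curve has
a flex point: if `Φ` is an irreducible homogeneous polynomial of degree 3, then there is a
nonzero point `p` on the curve `Φ = 0` where the gradient of `Φ` does not vanish but the
determinant of the Hessian matrix of `Φ` vanishes. -/
theorem irreducible_cubic_has_flex :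
    (∀ Φ : MvPolynomial (Fin 3) ℝ, Φ.IsHomogeneous 3 → Irreducible Φ →
      ∃ p : Fin 3 → ℝ, p ≠ 0 ∧ eval p Φ = 0 ∧ (∃ i, eval p (pderiv i Φ) ≠ 0) ∧
        Matrix.det (Matrix.of fun i j => eval p (pderiv i (pderiv j Φ))) = 0) ∧
    (∀ Φ : MvPolynomial (Fin 3) ℂ, Φ.IsHomogeneous 3 → Irreducible Φ →
      ∃ p : Fin 3 → ℂ, p ≠ 0 ∧ eval p Φ = 0 ∧ (∃ i, eval p (pderiv i Φ) ≠ 0) ∧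
        Matrix.det (Matrix.of fun i j => eval p (pderiv i (pderiv j Φ))) = 0) := by
  exact ⟨fun _ h hi => FlexAux.main FlexAux.real_odd h hi,
    fun _ h hi => FlexAux.main FlexAux.complex_odd h hi⟩
end

section
/- Fix n ≥ 3 and topologize the set of nonzero real homogeneous polynomials of degree n in x, y, z by their coefficients. Call such a polynomial Φ real-smooth if there is no p ∈ ℝ³∖{0} with Φ(p) = 0 and ∇Φ(p) = 0, and complex-smooth if there is no q ∈ ℂ³∖{0} with Φ(q) = 0 and ∇Φ(q) = 0. Then the complex-smooth polynomials are dense in the set of real-smooth ones; moreover, every connected component of the set of real-smooth polynomials of degree n contains complex-smooth points, and its set of complex-smooth points is connected, so each connected component of the real-smooth locus determines a unique connected component of the complex-smooth locus. -/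
open MvPolynomial

noncomputable section

/-- The standard topology on real polynomials in three variables, by coefficients. -/
instance : TopologicalSpace (MvPolynomial (Fin 3) ℝ) :=
  TopologicalSpace.induced (fun Φ d => MvPolynomial.coeff d Φ) inferInstance

/-- `Φ` is real-smooth: there is no `p ∈ ℝ³ ∖ {0}` with `Φ(p) = 0` and `∇Φ(p) = 0`. -/
def RealSmooth (Φ : MvPolynomial (Fin 3) ℝ) : Prop :=
  ¬ ∃ p : Fin 3 → ℝ, p ≠ 0 ∧ eval p Φ = 0 ∧ ∀ i, eval p (pderiv i Φ) = 0

/-- `Φ` is complex-smooth: there is no `q ∈ ℂ³ ∖ {0}` with `Φ(q) = 0` and `∇Φ(q) = 0`,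
where `Φ` is applied to complex arguments via its complexification. -/
def ComplexSmooth (Φ : MvPolynomial (Fin 3) ℝ) : Prop :=
  ¬ ∃ q : Fin 3 → ℂ, q ≠ 0 ∧ eval q (MvPolynomial.map (algebraMap ℝ ℂ) Φ) = 0 ∧
    ∀ i, eval q (pderiv i (MvPolynomial.map (algebraMap ℝ ℂ) Φ)) = 0

/-- The set of nonzero real-smooth homogeneous polynomials of degree `n`. -/
def RSset (n : ℕ) : Set ↥(homogeneousSubmodule (Fin 3) ℝ n) :=
  {Φ | (Φ : MvPolynomial (Fin 3) ℝ) ≠ 0 ∧ RealSmooth (Φ : MvPolynomial (Fin 3) ℝ)}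

/-- The set of nonzero complex-smooth homogeneous polynomials of degree `n`. -/
def CSset (n : ℕ) : Set ↥(homogeneousSubmodule (Fin 3) ℝ n) :=
  {Φ | (Φ : MvPolynomial (Fin 3) ℝ) ≠ 0 ∧ ComplexSmooth (Φ : MvPolynomial (Fin 3) ℝ)}


/-! ### Topological part -/

lemma topo_main {X : Type*} [TopologicalSpace X] [LocallyConnectedSpace X] (R G : Set X)
    (hR : IsOpen R)
    (hloc : ∀ x ∈ R, ∀ O : Set X, IsOpen O → x ∈ O → ∃ C : Set X, IsOpen C ∧ x ∈ C ∧ C ⊆ O ∧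
      C ⊆ R ∧ IsPreconnected (C ∩ G))
    (hdense : ∀ O : Set X, IsOpen O → O ⊆ R → O.Nonempty → (O ∩ G).Nonempty) :
    R ⊆ closure G ∧ ∀ Φ ∈ R, (connectedComponentIn R Φ ∩ G).Nonempty ∧
      IsConnected (connectedComponentIn R Φ ∩ G) := by
  refine ⟨fun x hx => ?_, fun Φ hΦ => ?_⟩
  · rw [mem_closure_iff]
    intro o ho hxo
    obtain ⟨y, hy, hyG⟩ := hdense (o ∩ R) (ho.inter hR) Set.inter_subset_right ⟨x, hxo, hx⟩
    exact ⟨y, hy.1, hyG⟩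
  set U := connectedComponentIn R Φ with hU
  have hUo : IsOpen U := hR.connectedComponentIn
  have hUR : U ⊆ R := connectedComponentIn_subset R Φ
  have hUc : IsPreconnected U := isPreconnected_connectedComponentIn
  have hne : (U ∩ G).Nonempty := hdense U hUo hUR ⟨Φ, mem_connectedComponentIn hΦ⟩
  refine ⟨hne, hne, ?_⟩
  obtain ⟨z, hz⟩ := hne
  set K := connectedComponentIn (U ∩ G) z with hK
  have hloc' : ∀ x ∈ U, ∃ C : Set X, IsOpen C ∧ x ∈ C ∧ C ⊆ U ∧ IsPreconnected (C ∩ G) := by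
    intro x hx
    obtain ⟨C, h1, h2, h3, _, h5⟩ := hloc x (hUR hx) U hUo hx
    exact ⟨C, h1, h2, h3, h5⟩
  have key : ∀ C : Set X, C ⊆ U → IsPreconnected (C ∩ G) → ((C ∩ G) ∩ K).Nonempty →
      C ∩ G ⊆ K := by
    rintro C hCU hC ⟨y, hy, hyK⟩
    have := hC.subset_connectedComponentIn hy
      (Set.inter_subset_inter_left G hCU)
    rwa [← connectedComponentIn_eq hyK] at this
  let O : Set X := {x | ∃ C : Set X, IsOpen C ∧ x ∈ C ∧ C ⊆ U ∧ C ∩ G ⊆ K}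
  let O' : Set X := {x | ∃ C : Set X, IsOpen C ∧ x ∈ C ∧ C ⊆ U ∧ C ∩ G ∩ K = ∅}
  have hO : IsOpen O := by
    rw [isOpen_iff_forall_mem_open]
    rintro x ⟨C, h1, h2, h3, h4⟩
    exact ⟨C, fun y hy => ⟨C, h1, hy, h3, h4⟩, h1, h2⟩
  have hO' : IsOpen O' := by
    rw [isOpen_iff_forall_mem_open]
    rintro x ⟨C, h1, h2, h3, h4⟩
    exact ⟨C, fun y hy => ⟨C, h1, hy, h3, h4⟩, h1, h2⟩
  have hcov : U ⊆ O ∪ O' := by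
    intro x hx
    obtain ⟨C, h1, h2, h3, h4⟩ := hloc' x hx
    by_cases h : (C ∩ G ∩ K).Nonempty
    · exact Or.inl ⟨C, h1, h2, h3, key C h3 h4 h⟩
    · exact Or.inr ⟨C, h1, h2, h3, Set.not_nonempty_iff_eq_empty.1 h⟩
  have hzK : z ∈ K := mem_connectedComponentIn hz
  have hzO : z ∈ O := by
    obtain ⟨C, h1, h2, h3, h4⟩ := hloc' z hz.1
    exact ⟨C, h1, h2, h3, key C h3 h4 ⟨z, ⟨h2, hz.2⟩, hzK⟩⟩
  have hdisj : ∀ x ∈ O, x ∉ O' := by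
    rintro x ⟨C, h1, h2, h3, h4⟩ ⟨C', h1', h2', h3', h4'⟩
    obtain ⟨y, hy, hyG⟩ := hdense (C ∩ C') (h1.inter h1')
      (fun y hy => hUR (h3 hy.1)) ⟨x, h2, h2'⟩
    have : y ∈ C' ∩ G ∩ K := ⟨⟨hy.2, hyG⟩, h4 ⟨hy.1, hyG⟩⟩
    rw [h4'] at this
    exact this
  have hall : U ⊆ O := by
    intro x hx
    by_contra hxO
    have hxO' : x ∈ O' := (hcov hx).resolve_left hxO
    obtain ⟨y, _, hy1, hy2⟩ := hUc O O' hO hO' hcov ⟨z, hz.1, hzO⟩ ⟨x, hx, hxO'⟩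
    exact hdisj y hy1 hy2
  have : U ∩ G = K := by
    apply Set.Subset.antisymm
    · rintro y ⟨hyU, hyG⟩
      obtain ⟨C, h1, h2, h3, h4⟩ := hall hyU
      exact h4 ⟨h2, hyG⟩
    · exact connectedComponentIn_subset _ _
  rw [this]
  exact isPreconnected_connectedComponentIn

/-! ### Coordinates -/

/-- Exponents of degree `n`. -/
abbrev SExp (n : ℕ) := {d : Fin 3 →₀ ℕ // d.degree = n}

instance (n : ℕ) : Fintype (SExp n) := (Finsupp.finite_of_degree_eq (σ := Fin 3) n).fintype

/-- Coefficient vectors. -/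
abbrev EV (n : ℕ) := SExp n → ℝ

/-- Polynomial with given coefficients. -/
def toPoly (n : ℕ) : EV n →ₗ[ℝ] MvPolynomial (Fin 3) ℝ :=
  ∑ d : SExp n, (monomial d.1).comp (LinearMap.proj d)

lemma toPoly_apply (n : ℕ) (c : EV n) : toPoly n c = ∑ d : SExp n, c d • monomial d.1 (1 : ℝ) := by
  simp [toPoly, smul_monomial]

lemma coeff_toPoly (n : ℕ) (c : EV n) (d : SExp n) : coeff d.1 (toPoly n c) = c d := by
  classical
  rw [toPoly_apply, coeff_sum, Finset.sum_eq_single d]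
  · simp
  · intro b _ hb
    rw [coeff_smul, coeff_monomial, if_neg (fun h => hb (Subtype.ext h)), smul_zero]
  · simp

lemma toPoly_hom (n : ℕ) (c : EV n) : (toPoly n c).IsHomogeneous n := by
  rw [toPoly_apply]
  refine IsHomogeneous.sum _ _ _ fun d _ => ?_
  rw [smul_monomial]
  exact isHomogeneous_monomial _ d.2

/-- Coefficients of a polynomial. -/
def ofPoly (n : ℕ) (P : MvPolynomial (Fin 3) ℝ) : EV n := fun d => coeff d.1 P

lemma toPoly_ofPoly (n : ℕ) (P : MvPolynomial (Fin 3) ℝ) (hP : P.IsHomogeneous n) :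
    toPoly n (ofPoly n P) = P := by
  ext d
  by_cases hd : d.degree = n
  · exact coeff_toPoly n _ ⟨d, hd⟩
  · rw [hP.coeff_eq_zero hd, (toPoly_hom n _).coeff_eq_zero hd]

lemma ofPoly_toPoly (n : ℕ) (c : EV n) : ofPoly n (toPoly n c) = c := by
  ext d
  exact coeff_toPoly n c d

lemma continuous_coeff (d : Fin 3 →₀ ℕ) :
    Continuous (fun P : MvPolynomial (Fin 3) ℝ => coeff d P) :=
  (continuous_apply d).comp continuous_induced_dom

lemma coeff_toPoly_cont (n : ℕ) (d : Fin 3 →₀ ℕ) :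
    Continuous (fun c : EV n => coeff d (toPoly n c)) := by
  by_cases hd : d.degree = n
  · have : (fun c : EV n => coeff d (toPoly n c)) = fun c => c ⟨d, hd⟩ := by
      ext c; exact coeff_toPoly n c ⟨d, hd⟩
    rw [this]; exact continuous_apply _
  · have : (fun c : EV n => coeff d (toPoly n c)) = fun c => 0 := by
      ext c; exact (toPoly_hom n c).coeff_eq_zero hd
    rw [this]; exact continuous_const

/-- Coordinates on the space of forms. -/
def homeoV (n : ℕ) : ↥(homogeneousSubmodule (Fin 3) ℝ n) ≃ₜ EV n where
  toFun Φ := ofPoly n Φ.1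
  invFun c := ⟨toPoly n c, toPoly_hom n c⟩
  left_inv Φ := Subtype.ext (toPoly_ofPoly n Φ.1 Φ.2)
  right_inv c := ofPoly_toPoly n c
  continuous_toFun := continuous_pi fun d => (continuous_coeff d.1).comp continuous_subtype_val
  continuous_invFun := by
    refine Continuous.subtype_mk ?_ _
    exact continuous_induced_rng.2 (continuous_pi fun d => coeff_toPoly_cont n d)

lemma eval_lin_cont (n : ℕ) (D : MvPolynomial (Fin 3) ℝ →ₗ[ℝ] MvPolynomial (Fin 3) ℝ) :
    Continuous (fun x : (Fin 3 → ℝ) × EV n => eval x.1 (D (toPoly n x.2))) := by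
  have : (fun x : (Fin 3 → ℝ) × EV n => eval x.1 (D (toPoly n x.2))) =
      fun x => ∑ d : SExp n, x.2 d * eval x.1 (D (monomial d.1 (1 : ℝ))) := by
    ext x
    rw [toPoly_apply]
    simp only [map_sum, map_smul, smul_eval]
  rw [this]
  refine continuous_finsetSum _ fun d _ => ?_
  refine ((continuous_apply d).comp continuous_snd).mul ?_
  exact (MvPolynomial.continuous_eval _).comp continuous_fst

lemma eval_id_cont (n : ℕ) :
    Continuous (fun x : (Fin 3 → ℝ) × EV n => eval x.1 (toPoly n x.2)) :=
  eval_lin_cont n LinearMap.id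

/-- Evaluation of a partial derivative. -/
def evalPd (n : ℕ) (i : Fin 3) (p : Fin 3 → ℝ) (c : EV n) : ℝ := eval p (pderiv i (toPoly n c))

lemma eval_pderiv_cont (n : ℕ) (i : Fin 3) :
    Continuous (fun x : (Fin 3 → ℝ) × EV n => evalPd n i x.1 x.2) := by
  have := eval_lin_cont n (pderiv (R := ℝ) i).toLinearMap
  simpa only [evalPd, Derivation.coeFn_coe] using this

lemma aeval_scale {A : Type*} [CommRing A] [Algebra ℝ A] {P : MvPolynomial (Fin 3) ℝ} {n : ℕ}
    (hP : P.IsHomogeneous n) (r : A) (q : Fin 3 → A) :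
    aeval (fun i => r * q i) P = r ^ n * aeval q P := by
  rw [aeval_def, aeval_def, eval₂_eq', eval₂_eq', Finset.mul_sum]
  refine Finset.sum_congr rfl fun d hd => ?_
  have : d.degree = n := by
    by_contra h
    exact (mem_support_iff.1 hd) (hP.coeff_eq_zero h)
  simp only [mul_pow]
  rw [Finset.prod_mul_distrib, Finset.prod_pow_eq_pow_sum, ← Finsupp.degree_eq_sum, this]
  ring

/-- Singular points with coordinates in an algebra. -/
def SingAt {A : Type*} [CommRing A] [Algebra ℝ A] (P : MvPolynomial (Fin 3) ℝ) (q : Fin 3 → A) :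
    Prop := aeval q P = 0 ∧ ∀ i, aeval q (pderiv i P) = 0

lemma SingAt.scale {A : Type*} [CommRing A] [Algebra ℝ A] {P : MvPolynomial (Fin 3) ℝ} {n : ℕ}
    (hP : P.IsHomogeneous n) (r : A) {q : Fin 3 → A} (h : SingAt P q) :
    SingAt P (fun i => r * q i) := by
  refine ⟨by rw [aeval_scale hP, h.1, mul_zero], fun i => ?_⟩
  rw [aeval_scale (hP.pderiv), h.2 i, mul_zero]

lemma realSmooth_iff (P : MvPolynomial (Fin 3) ℝ) :
    RealSmooth P ↔ ¬ ∃ p : Fin 3 → ℝ, p ≠ 0 ∧ SingAt P p := by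
  simp only [RealSmooth, SingAt]
  rfl

lemma complexSmooth_iff (P : MvPolynomial (Fin 3) ℝ) :
    ComplexSmooth P ↔ ¬ ∃ q : Fin 3 → ℂ, q ≠ 0 ∧ SingAt P q := by
  simp only [ComplexSmooth, SingAt, pderiv_map, eval_map, aeval_def]

lemma complexSmooth_real {P : MvPolynomial (Fin 3) ℝ} (h : ComplexSmooth P) : RealSmooth P := by
  rw [realSmooth_iff]
  rw [complexSmooth_iff] at h
  rintro ⟨p, hp, h1, h2⟩
  refine h ⟨fun i => algebraMap ℝ ℂ (p i), ?_, ?_, ?_⟩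
  · intro h0
    apply hp
    ext i
    have := congrFun h0 i
    simpa using this
  · have := aeval_algebraMap_apply ℂ p P
    rw [h1, map_zero] at this
    exact this
  · intro i
    have := aeval_algebraMap_apply ℂ p (pderiv i P)
    rw [h2, map_zero] at this
    exact this

lemma realSmooth_ne_zero {P : MvPolynomial (Fin 3) ℝ} (h : RealSmooth P) : P ≠ 0 := by
  rintro rfl
  exact h ⟨1, one_ne_zero, by simp, by simp⟩

/-- Evaluation. -/
def evalId (n : ℕ) (p : Fin 3 → ℝ) (c : EV n) : ℝ := eval p (toPoly n c)

lemma closed_aux (n : ℕ) {Y : Type*} [TopologicalSpace Y] (F : Y → (Fin 3 → ℝ) × EV n)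
    (hF : Continuous F) :
    IsClosed {y | evalId n (F y).1 (F y).2 = 0 ∧ ∀ i, evalPd n i (F y).1 (F y).2 = 0} := by
  have h0 : IsClosed {x : (Fin 3 → ℝ) × EV n | evalId n x.1 x.2 = 0} :=
    isClosed_eq (eval_id_cont n) continuous_const
  have h1 (i : Fin 3) : IsClosed {x : (Fin 3 → ℝ) × EV n | evalPd n i x.1 x.2 = 0} :=
    isClosed_eq (eval_pderiv_cont n i) continuous_const
  convert! (h0.inter (isClosed_iInter h1)).preimage hF using 1
  ext y
  simp

lemma isOpen_realSmooth (n : ℕ) : IsOpen {c : EV n | RealSmooth (toPoly n c)} := by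
  rw [← isClosed_compl_iff]
  let T : Set (Metric.sphere (0 : Fin 3 → ℝ) 1 × EV n) :=
    {x | evalId n x.1.1 x.2 = 0 ∧ ∀ i, evalPd n i x.1.1 x.2 = 0}
  have hT : IsClosed T := closed_aux n
    (fun x : Metric.sphere (0 : Fin 3 → ℝ) 1 × EV n => (x.1.1, x.2)) (by fun_prop)
  have := isClosedMap_snd_of_compactSpace (X := Metric.sphere (0 : Fin 3 → ℝ) 1) (Y := EV n) T hT
  convert! this using 1
  ext c
  simp only [Set.mem_compl_iff, Set.mem_ofPred_eq, realSmooth_iff, not_not, Set.mem_image]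
  constructor
  · rintro ⟨p, hp, hs⟩
    have h' := hs.scale (toPoly_hom n c) (‖p‖⁻¹)
    refine ⟨(⟨fun i => ‖p‖⁻¹ * p i, ?_⟩, c), ?_, rfl⟩
    · rw [mem_sphere_zero_iff_norm]
      have : (fun i => ‖p‖⁻¹ * p i) = ‖p‖⁻¹ • p := by ext i; simp
      rw [this, norm_smul, norm_inv, norm_norm, inv_mul_cancel₀ (norm_ne_zero_iff.2 hp)]
    · exact h'
  · rintro ⟨⟨p, c'⟩, hx, rfl⟩
    exact ⟨p.1, ne_zero_of_mem_unit_sphere p, hx⟩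

/-! ### The dimension count -/

lemma pderiv_aeval_chain (L : Fin 3 → MvPolynomial (Fin 3) ℝ) (m : Fin 3)
    (P : MvPolynomial (Fin 3) ℝ) :
    pderiv m (aeval L P) = ∑ a, aeval L (pderiv a P) * pderiv m (L a) := by
  induction P using MvPolynomial.induction_on with
  | C r => simp [algebraMap_eq]
  | add p q hp hq => simp only [map_add, hp, hq, add_mul, Finset.sum_add_distrib]
  | mul_X p i hp =>
    simp only [map_mul, aeval_X, Derivation.leibniz, hp, smul_eq_mul, map_add, add_mul,
      Finset.sum_add_distrib, Finset.mul_sum, pderiv_X]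
    congr 1
    · rw [Finset.sum_eq_single i]
      · simp
      · intro b _ hb
        simp [hb.symm]
      · simp
    · refine Finset.sum_congr rfl fun x _ => by ring

/-- The base point. -/
def qBase : Fin 3 → ℂ := ![1, Complex.I, 0]

/-- Forms singular at the base point. -/
def WSub (n : ℕ) : Submodule ℝ (EV n) where
  carrier := {w | ∀ m, aeval qBase (pderiv m (toPoly n w)) = 0}
  add_mem' := by
    intro a b ha hb m
    rw [map_add, map_add, map_add, ha m, hb m, add_zero]
  zero_mem' := by intro m; simp
  smul_mem' := by
    intro r a ha m
    rw [map_smul, Derivation.map_smul, map_smul, ha m, smul_zero]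

/-- Six test monomials. -/
def sixMon (N : ℕ) : Fin 6 → MvPolynomial (Fin 3) ℝ :=
  ![X 0 ^ (N + 3), X 0 ^ (N + 2) * X 1, X 0 ^ (N + 1) * X 1 ^ 2, X 0 ^ N * X 1 ^ 3,
    X 0 ^ (N + 2) * X 2, X 0 ^ (N + 1) * X 1 * X 2]

lemma sixMon_hom (N : ℕ) (k : Fin 6) : (sixMon N k).IsHomogeneous (N + 3) := by
  have hp (i : Fin 3) (e : ℕ) : (X i ^ e : MvPolynomial (Fin 3) ℝ).IsHomogeneous e :=
    isHomogeneous_X_pow i e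
  have hx (i : Fin 3) : (X i : MvPolynomial (Fin 3) ℝ).IsHomogeneous 1 := isHomogeneous_X _ i
  fin_cases k
  · exact hp 0 _
  · exact (hp 0 (N + 2)).mul (hx 1)
  · exact (hp 0 (N + 1)).mul (hp 1 2)
  · exact (hp 0 N).mul (hp 1 3)
  · exact (hp 0 (N + 2)).mul (hx 2)
  · exact ((hp 0 (N + 1)).mul (hx 1)).mul (hx 2)

lemma sixMon_indep (N : ℕ) (c : Fin 6 → ℝ)
    (h : ∀ m, aeval qBase (pderiv m (∑ k, c k • sixMon N k)) = 0) : c = 0 := by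
  have h0 := h 0
  have h1 := h 1
  have h2 := h 2
  simp [Fin.sum_univ_succ, sixMon, qBase, pderiv_X, Derivation.leibniz_pow,
    Complex.ext_iff, Fin.succ, pow_succ] at h0 h1 h2
  obtain ⟨h0a, h0b⟩ := h0
  obtain ⟨h1a, h1b⟩ := h1
  have hN : (0 : ℝ) ≤ N := Nat.cast_nonneg N
  have e1 : c 1 = 3 * c 3 := by linarith
  have e3 : c 3 = 0 := by
    rw [e1] at h0b
    have : c 3 * (2 * N + 6) = 0 := by linarith
    exact (mul_eq_zero.1 this).resolve_right (by positivity)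
  have e0 : c 0 = 0 := by
    rw [h1b] at h0a
    have : c 0 * (N + 3) = 0 := by linarith
    exact (mul_eq_zero.1 this).resolve_right (by positivity)
  ext k
  fin_cases k
  · exact e0
  · simpa [e3] using e1
  · exact h1b
  · exact e3
  · exact h2.1
  · exact h2.2

lemma ofPoly_add (n : ℕ) (P Q : MvPolynomial (Fin 3) ℝ) :
    ofPoly n (P + Q) = ofPoly n P + ofPoly n Q := by
  ext d; simp [ofPoly]

lemma toPoly_inj (n : ℕ) {a b : EV n} (h : toPoly n a = toPoly n b) : a = b := by
  rw [← ofPoly_toPoly n a, h, ofPoly_toPoly]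

lemma finrank_WSub (n : ℕ) (hn : 3 ≤ n) :
    Module.finrank ℝ (WSub n) + 6 ≤ Module.finrank ℝ (EV n) := by
  obtain ⟨N, rfl⟩ : ∃ N, n = N + 3 := ⟨n - 3, by omega⟩
  let g : (Fin 6 → ℝ) →ₗ[ℝ] EV (N + 3) :=
    Fintype.linearCombination ℝ (fun k => ofPoly (N + 3) (sixMon N k))
  have hg (c : Fin 6 → ℝ) : toPoly (N + 3) (g c) = ∑ k, c k • sixMon N k := by
    simp only [g, Fintype.linearCombination_apply, map_sum, map_smul,
      toPoly_ofPoly _ _ (sixMon_hom N _)]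
  let T : (WSub (N + 3) × (Fin 6 → ℝ)) →ₗ[ℝ] EV (N + 3) := (WSub (N + 3)).subtype.coprod g
  have hT : Function.Injective T := by
    rw [← LinearMap.ker_eq_bot, LinearMap.ker_eq_bot']
    rintro ⟨w, c⟩ h
    have h' : (w : EV (N + 3)) + g c = 0 := h
    have hgc : g c ∈ WSub (N + 3) := by
      rw [eq_neg_of_add_eq_zero_right h']
      exact Submodule.neg_mem _ w.2
    have hc : c = 0 := by
      apply sixMon_indep N c
      intro m
      rw [← hg]
      exact hgc m
    subst hc
    rw [map_zero, add_zero] at h'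
    exact Prod.ext (Subtype.ext h') rfl
  have := LinearMap.finrank_le_finrank_of_injective hT
  rw [Module.finrank_prod, Module.finrank_fin_fun] at this
  exact this

/-- A family of linear substitutions. -/
def Ltri (i j k : Fin 3) (p : Fin 5 → ℝ) : Fin 3 → MvPolynomial (Fin 3) ℝ :=
  ![X i, C (p 0) * X i + C (p 1) * X j, X k + C (p 2) * X i + C (p 3) * X j]

lemma Ltri_hom (i j k : Fin 3) (p : Fin 5 → ℝ) (a : Fin 3) : (Ltri i j k p a).IsHomogeneous 1 := by
  have hx (i : Fin 3) : (X i : MvPolynomial (Fin 3) ℝ).IsHomogeneous 1 := isHomogeneous_X _ i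
  fin_cases a
  · exact hx i
  · exact ((hx i).C_mul _).add ((hx j).C_mul _)
  · exact ((hx k).add ((hx i).C_mul _)).add ((hx j).C_mul _)

lemma Ltri_smooth (i j k : Fin 3) (a : Fin 3) (d : Fin 3 →₀ ℕ) :
    ContDiff ℝ 1 (fun p : Fin 5 → ℝ => coeff d (Ltri i j k p a)) := by
  fin_cases a <;> simp [Ltri, coeff_C_mul] <;> fun_prop

lemma aeval_Ltri_smooth (i j k : Fin 3) (P : MvPolynomial (Fin 3) ℝ) :
    ∀ (d : Fin 3 →₀ ℕ), ContDiff ℝ 1 (fun p : Fin 5 → ℝ => coeff d (aeval (Ltri i j k p) P)) := by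
  classical
  induction P using MvPolynomial.induction_on with
  | C r =>
    intro d
    simp only [algHom_C]
    exact contDiff_const
  | add p q hp hq =>
    intro d
    simp only [map_add, coeff_add]
    exact (hp d).add (hq d)
  | mul_X p a hp =>
    intro d
    simp only [map_mul, aeval_X, coeff_mul]
    exact ContDiff.sum fun x _ => (hp x.1).mul (Ltri_smooth i j k a x.2)

/-- The parametrization of the bad cone. -/
def Fmap (n : ℕ) (f : EV n) (t : Fin 3 × Fin 3 × Fin 3) (x : WSub n × (Fin 5 → ℝ)) : EV n :=
  x.2 4 • f + ofPoly n (aeval (Ltri t.1 t.2.1 t.2.2 x.2) (toPoly n x.1))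

lemma Fmap_smooth (n : ℕ) (f : EV n) (t : Fin 3 × Fin 3 × Fin 3) : ContDiff ℝ 1 (Fmap n f t) := by
  rw [contDiff_pi]
  intro d
  have : (fun x => Fmap n f t x d) = fun x : WSub n × (Fin 5 → ℝ) => x.2 4 * f d +
      ∑ e : SExp n, (x.1 : EV n) e *
        coeff d.1 (aeval (Ltri t.1 t.2.1 t.2.2 x.2) (monomial e.1 (1 : ℝ))) := by
    ext x
    simp only [Fmap, ofPoly, Pi.add_apply, Pi.smul_apply, smul_eq_mul]
    rw [toPoly_apply, map_sum, coeff_sum]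
    simp only [map_smul, coeff_smul, smul_eq_mul]
  rw [this]
  refine ContDiff.add (by fun_prop) (ContDiff.sum fun e _ => ContDiff.mul ?_ ?_)
  · have h1 : ContDiff ℝ 1 (fun x : WSub n × (Fin 5 → ℝ) => (x.1 : EV n)) :=
      (WSub n).subtypeL.contDiff.comp contDiff_fst
    exact (contDiff_pi.1 h1) e
  · exact (aeval_Ltri_smooth t.1 t.2.1 t.2.2 _ d.1).comp contDiff_snd

/-- The bad cone. -/
def badSet (n : ℕ) (f : EV n) : Set (EV n) := ⋃ t, Set.range (Fmap n f t)

lemma dimH_badSet (n : ℕ) (hn : 3 ≤ n) (f : EV n) :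
    dimH (badSet n f) < Module.finrank ℝ (EV n) := by
  have h1 : dimH (badSet n f) ≤ (Module.finrank ℝ (WSub n) + 5 : ℕ) := by
    rw [badSet, dimH_iUnion]
    refine iSup_le fun t => ?_
    have := (Fmap_smooth n f t).dimH_range_le
    rwa [Module.finrank_prod, Module.finrank_fin_fun] at this
  refine h1.trans_lt ?_
  have := finrank_WSub n hn
  exact_mod_cast (by omega : Module.finrank ℝ (WSub n) + 5 < Module.finrank ℝ (EV n))

lemma dense_good (n : ℕ) (hn : 3 ≤ n) (f g : EV n) : Dense (badSet n f ∪ badSet n g)ᶜ := by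
  apply dense_compl_of_dimH_lt_finrank
  rw [dimH_union]
  exact max_lt (dimH_badSet n hn f) (dimH_badSet n hn g)

lemma third_ne (i j : Fin 3) (h : i ≠ j) :
    ∃ k, k ≠ i ∧ k ≠ j ∧ ∀ a : Fin 3, a = i ∨ a = j ∨ a = k := by
  revert i j; decide

lemma bad_param (n : ℕ) (P : MvPolynomial (Fin 3) ℝ) (hP : P.IsHomogeneous n)
    (hR : RealSmooth P) (hC : ¬ ComplexSmooth P) :
    ∃ t : Fin 3 × Fin 3 × Fin 3, ∃ w ∈ WSub n, ∃ p : Fin 5 → ℝ,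
      P = aeval (Ltri t.1 t.2.1 t.2.2 p) (toPoly n w) := by
  rw [complexSmooth_iff, not_not] at hC
  obtain ⟨q', hq', hs'⟩ := hC
  obtain ⟨i, hi⟩ := Function.ne_iff.1 hq'
  -- normalize
  obtain ⟨q, hqi, hs⟩ : ∃ q : Fin 3 → ℂ, q i = 1 ∧ SingAt P q :=
    ⟨fun a => (q' i)⁻¹ * q' a, inv_mul_cancel₀ hi, hs'.scale hP _⟩
  obtain ⟨j, hj⟩ : ∃ j, (q j).im ≠ 0 := by
    by_contra hcon
    push Not at hcon
    rw [realSmooth_iff] at hR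
    have hqe : q = fun a => algebraMap ℝ ℂ ((q a).re) := by
      ext a
      apply Complex.ext <;> simp [hcon a]
    have tr (Q : MvPolynomial (Fin 3) ℝ) (h : aeval q Q = 0) :
        aeval (fun a => (q a).re) Q = 0 := by
      have h2 := aeval_algebraMap_apply ℂ (fun a => (q a).re) Q
      have h3 : aeval q Q = algebraMap ℝ ℂ (aeval (fun a => (q a).re) Q) := by
        rw [← h2]; exact congrArg (fun r => aeval r Q) hqe
      rw [h] at h3
      exact (FaithfulSMul.algebraMap_injective ℝ ℂ) (by rw [← h3, map_zero])
    refine hR ⟨fun a => (q a).re, ?_, tr _ hs.1, fun m => tr _ (hs.2 m)⟩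
    intro h0
    have := congrFun h0 i
    simp [hqi] at this
  have hij : i ≠ j := by
    rintro rfl
    simp [hqi] at hj
  obtain ⟨k, hki, hkj, hk⟩ := third_ne i j hij
  let L' : Fin 3 → MvPolynomial (Fin 3) ℝ := fun a =>
    C (q a).re * X 0 + C (q a).im * X 1 + if a = k then X 2 else 0
  have hL' (a : Fin 3) : aeval qBase (L' a) = q a := by
    by_cases h : a = k <;> simp [L', h, qBase, Complex.re_add_im]
  have hcomp (Q : MvPolynomial (Fin 3) ℝ) : aeval qBase (aeval L' Q) = aeval q Q := by
    rw [← AlgHom.comp_apply]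
    congr 1
    ext a
    rw [AlgHom.comp_apply, aeval_X, aeval_X, hL']
  have hhom : (aeval L' P).IsHomogeneous n := by
    have := hP.aeval L' (n := 1) (fun a => by
      have hx (i : Fin 3) : (X i : MvPolynomial (Fin 3) ℝ).IsHomogeneous 1 := isHomogeneous_X _ i
      refine (((hx 0).C_mul _).add ((hx 1).C_mul _)).add ?_
      split_ifs
      · exact hx 2
      · exact isHomogeneous_zero _ _ _)
    rwa [one_mul] at this
  let b := (q j).im
  refine ⟨(i, j, k), ofPoly n (aeval L' P), ?_,
    ![-(q j).re / b, 1 / b, -(q k).re + (q k).im * (q j).re / b, -(q k).im / b, 0], ?_⟩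
  · intro m
    rw [toPoly_ofPoly _ _ hhom, pderiv_aeval_chain, map_sum]
    refine Finset.sum_eq_zero fun a _ => ?_
    rw [map_mul, hcomp, hs.2, zero_mul]
  · rw [toPoly_ofPoly _ _ hhom, ← AlgHom.comp_apply]
    have hb : b ≠ 0 := hj
    have : (aeval (Ltri i j k ![-(q j).re / b, 1 / b, -(q k).re + (q k).im * (q j).re / b,
        -(q k).im / b, 0])).comp (aeval L') = AlgHom.id ℝ (MvPolynomial (Fin 3) ℝ) := by
      apply MvPolynomial.algHom_ext
      intro a
      rw [AlgHom.comp_apply, aeval_X, AlgHom.id_apply]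
      rcases hk a with rfl | rfl | rfl
      · simp [L', hqi, hki.symm, Ltri]
      · simp only [L', hkj.symm, if_false, add_zero, map_add, map_mul, algHom_C, aeval_X, Ltri,
          algebraMap_eq, Matrix.cons_val_zero, Matrix.cons_val_one]
        have e1 : (C b : MvPolynomial (Fin 3) ℝ) * C (-(q a).re / b) = - C (q a).re := by
          rw [← C_mul, ← C_neg]; congr 1; field_simp
        have e2 : (C b : MvPolynomial (Fin 3) ℝ) * C (1 / b) = 1 := by
          rw [← C_mul, ← C_1]; congr 1; field_simp
        change C (q a).re * X i + C b * (C (-(q a).re / b) * X i + C (1 / b) * X a) = X a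
        linear_combination X i * e1 + X a * e2
      · simp only [L', if_true, map_add, map_mul, algHom_C, aeval_X, Ltri, algebraMap_eq]
        set u := (q a).re
        set v := (q a).im
        set s := (q j).re
        change C u * X i + C v * (C (-s / b) * X i + C (1 / b) * X j) +
          (X a + C (-u + v * s / b) * X i + C (-v / b) * X j) = X a
        have e1 : C u + C v * C (-s / b) + (C (-u + v * s / b) : MvPolynomial (Fin 3) ℝ) = 0 := by
          rw [← C_mul, ← C_add, ← C_add, ← C_0]; congr 1; field_simp; ring
        have e2 : C v * C (1 / b) + (C (-v / b) : MvPolynomial (Fin 3) ℝ) = 0 := by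
          rw [← C_mul, ← C_add, ← C_0]; congr 1; field_simp; ring
        linear_combination X i * e1 + X j * e2
    rw [this, AlgHom.id_apply]

/-! ### Conclusion -/

/-- Real-smooth coefficient vectors. -/
def RS' (n : ℕ) : Set (EV n) := {c | RealSmooth (toPoly n c)}

/-- Complex-smooth coefficient vectors. -/
def CS' (n : ℕ) : Set (EV n) := {c | ComplexSmooth (toPoly n c)}

lemma seg_good (n : ℕ) (f h : EV n) (hf : f ∈ CS' n) (hh : h ∉ badSet n f)
    (hseg : segment ℝ f h ⊆ RS' n) : segment ℝ f h ⊆ CS' n := by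
  intro c hc
  have hcR := hseg hc
  obtain ⟨a, t, ha, ht, hat, rfl⟩ := hc
  by_contra hbad
  obtain ⟨τ, w, hw, p, hp⟩ := bad_param n _ (toPoly_hom n _) hcR hbad
  rcases eq_or_ne t 0 with rfl | ht0
  · apply hbad
    have : a = 1 := by linarith
    rw [this, one_smul, zero_smul, add_zero]
    exact hf
  · apply hh
    refine Set.mem_iUnion.2 ⟨τ, (t⁻¹ • ⟨w, hw⟩, Function.update p 4 (-(t⁻¹ * a))), ?_⟩
    have hL : Ltri τ.1 τ.2.1 τ.2.2 (Function.update p 4 (-(t⁻¹ * a))) =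
        Ltri τ.1 τ.2.1 τ.2.2 p := by
      simp [Ltri, Function.update]
    simp only [Fmap]
    rw [hL, Submodule.coe_smul, map_smul, map_smul, ← hp, Function.update_self]
    rw [← map_smul, ofPoly_toPoly, smul_add, smul_smul, smul_smul, inv_mul_cancel₀ ht0, one_smul,
      neg_smul, neg_add_cancel_left]

lemma not_bad_good (n : ℕ) (h f : EV n) (hh : h ∉ badSet n f) (hR : h ∈ RS' n) : h ∈ CS' n := by
  by_contra hbad
  obtain ⟨τ, w, hw, p, hp⟩ := bad_param n _ (toPoly_hom n _) hR hbad
  apply hh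
  refine Set.mem_iUnion.2 ⟨τ, (⟨w, hw⟩, Function.update p 4 0), ?_⟩
  have hL : Ltri τ.1 τ.2.1 τ.2.2 (Function.update p 4 0) = Ltri τ.1 τ.2.1 τ.2.2 p := by
    simp [Ltri, Function.update]
  simp only [Fmap]
  rw [hL, ← hp, Function.update_self, zero_smul, zero_add, ofPoly_toPoly]

lemma ball_conn (n : ℕ) (hn : 3 ≤ n) (B : Set (EV n)) (hBo : IsOpen B) (hBc : Convex ℝ B)
    (hB : B ⊆ RS' n) : IsPreconnected (B ∩ CS' n) := by
  apply isPreconnected_of_forall_pair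
  rintro f ⟨hfB, hf⟩ g ⟨hgB, hg⟩
  obtain ⟨h, hhB, hh⟩ := (dense_good n hn f g).inter_open_nonempty B hBo ⟨f, hfB⟩
  rw [Set.mem_compl_iff, Set.mem_union, not_or] at hh
  have s1 := hBc.segment_subset hfB hhB
  have s2 := hBc.segment_subset hgB hhB
  refine ⟨segment ℝ f h ∪ segment ℝ g h, ?_, Or.inl (left_mem_segment ℝ f h),
    Or.inr (left_mem_segment ℝ g h), ?_⟩
  · exact Set.union_subset
      (Set.subset_inter s1 (seg_good n f h hf hh.1 (s1.trans hB)))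
      (Set.subset_inter s2 (seg_good n g h hg hh.2 (s2.trans hB)))
  · exact IsPreconnected.union h (right_mem_segment ℝ f h) (right_mem_segment ℝ g h)
      (convex_segment f h).isPreconnected (convex_segment g h).isPreconnected

/-- **Statement 18.** For `n ≥ 3`: the complex-smooth polynomials are dense in the set of
real-smooth ones; and every connected component of the real-smooth locus contains
complex-smooth points and its set of complex-smooth points is connected — hence each
connected component of the real-smooth locus determines a unique connected component of
the complex-smooth locus. -/
theorem complexSmooth_dense_in_realSmooth (n : ℕ) (hn : 3 ≤ n) :
    RSset n ⊆ closure (CSset n) ∧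
    ∀ Φ ∈ RSset n,
      (connectedComponentIn (RSset n) Φ ∩ CSset n).Nonempty ∧
      IsConnected (connectedComponentIn (RSset n) Φ ∩ CSset n) := by
  
  have : LocallyConnectedSpace ↥(homogeneousSubmodule (Fin 3) ℝ n) :=
    (homeoV n).isOpenEmbedding.locallyConnectedSpace
  have htp (Φ : ↥(homogeneousSubmodule (Fin 3) ℝ n)) : toPoly n (homeoV n Φ) = Φ.1 :=
    toPoly_ofPoly n Φ.1 Φ.2
  have hRS : RSset n = homeoV n ⁻¹' RS' n := by
    ext Φ
    change (_ ∧ _) ↔ RealSmooth (toPoly n (homeoV n Φ))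
    rw [htp]
    exact ⟨fun h => h.2, fun h => ⟨realSmooth_ne_zero h, h⟩⟩
  have hCS : CSset n = homeoV n ⁻¹' CS' n := by
    ext Φ
    change (_ ∧ _) ↔ ComplexSmooth (toPoly n (homeoV n Φ))
    rw [htp]
    exact ⟨fun h => h.2, fun h => ⟨realSmooth_ne_zero (complexSmooth_real h), h⟩⟩
  have hRo : IsOpen (RS' n) := isOpen_realSmooth n
  rw [hRS, hCS]
  refine topo_main _ _ (hRo.preimage (homeoV n).continuous) ?_ ?_
  · intro x hx O hO hxO
    have h1 : IsOpen ((homeoV n).symm ⁻¹' O ∩ RS' n) :=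
      (hO.preimage (homeoV n).symm.continuous).inter hRo
    obtain ⟨ε, hε, hball⟩ := Metric.isOpen_iff.1 h1 (homeoV n x) ⟨by simpa using hxO, hx⟩
    refine ⟨homeoV n ⁻¹' Metric.ball (homeoV n x) ε,
      Metric.isOpen_ball.preimage (homeoV n).continuous, Metric.mem_ball_self hε, ?_, ?_, ?_⟩
    · intro y hy
      simpa using (hball hy).1
    · exact fun y hy => (hball hy).2
    · rw [← Set.preimage_inter, (homeoV n).isPreconnected_preimage]
      exact ball_conn n hn _ Metric.isOpen_ball (convex_ball _ _) (fun y hy => (hball hy).2)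
  · intro O hO hOR hne
    obtain ⟨x, hx⟩ := hne
    obtain ⟨h, hhO, hh⟩ := (dense_good n hn 0 0).inter_open_nonempty _
      (hO.preimage (homeoV n).symm.continuous) ⟨homeoV n x, by simpa using hx⟩
    rw [Set.mem_compl_iff, Set.mem_union, not_or] at hh
    have hhR : h ∈ RS' n := by simpa using hOR hhO
    refine ⟨(homeoV n).symm h, hhO, ?_⟩
    simpa using not_bad_good n h 0 hh.1 hhR
end
end
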